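/- arXiv:math/0511747 — 4 statements merged into one kernel-verified Lean document; each statement's English description precedes it below -/
import Mathlib

section
/- Let p be a prime, d and u positive integers (with u ≥ 2 if p = 2), and let Γ = CS(u,d,p). If k is any field of characteristic p, then the group algebra k[Γ] is a domain (it has no zero divisors). -/
/-!
Write an element of `Γ` as `g = 1 + p ^ u * x`. In the coordinates `x` (the matrix entries, which
lie in `ℤ_p`) the multiplication of `Γ` reads `x + y + p ^ u * (x * y)`.

The binomial functions `x ↦ ∏ i, binom(x i, m i)`, reduced modulo `p`, attach to an element `a` of
`k[Γ]` a power series `Φ(a) = ∑ m, ⟨a, binom(·, m)⟩ T ^ m`. The map `Φ` is injective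
(`pairing_separating`): the function `binom(·, p ^ s - 1)` modulo `p` is nonzero on exactly one
residue class modulo `p ^ s`, so its translates isolate points.

The map `Φ` is multiplicative up to terms of higher order. By Vandermonde,
`binom(w + p ^ u * v, m) = ∑ binom(w, i) * binom(p ^ u * v, j)` over `i + j = m`, and the Frobenius
identity `(1 + T) ^ (p ^ u * v) = (1 + T ^ (p ^ u)) ^ v` shows that `binom(p ^ u * v, j)` modulo `p`
is `binom(v, j / p ^ u)` or `0` (`bin_pow_mul`). As `v` is quadratic in the coordinates, this has
degree at most `2 * j / p ^ u`, which is less than `j` for `j > 0` because `p ^ u ≥ 3`; this is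
where `u ≥ 2` for `p = 2` enters (`prod_perturb`). So `Φ(a * b)` and `Φ(a) * Φ(b)` have the same
lowest-degree part (`noZeroDivisors_of_leading`), and the latter is nonzero because power series
over a field form a domain. Hence `a * b ≠ 0`.
-/

/-- The reduction homomorphism `GL_d(ℤ_p) →* GL_d(ℤ_p/p^i)` obtained by reducing every
matrix entry modulo `p^i`. -/
noncomputable def csRed (p : ℕ) [Fact p.Prime] (i d : ℕ) :
    (Matrix (Fin d) (Fin d) ℤ_[p])ˣ →*
      (Matrix (Fin d) (Fin d) (ℤ_[p] ⧸ Ideal.span {(p : ℤ_[p]) ^ i}))ˣ :=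
  Units.map
    (RingHom.toMonoidHom
      (RingHom.mapMatrix (Ideal.Quotient.mk (Ideal.span {(p : ℤ_[p]) ^ i}))))

/-- The congruence subgroup `CS(i,d,p)`: the subgroup of `GL_d(ℤ_p)` consisting of the
matrices congruent to the identity modulo `p^i`, i.e. the kernel of reduction mod `p^i`. -/
noncomputable def CS (p : ℕ) [Fact p.Prime] (i d : ℕ) :
    Subgroup (Matrix (Fin d) (Fin d) ℤ_[p])ˣ :=
  (csRed p i d).ker

/-! ### Binomial functions modulo `p` -/

namespace CongruenceDomain

open Finset Filter Topology

variable {p : ℕ} [Fact p.Prime] (k : Type*) [Field k] [CharP k p]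

/-- The `m`-th Mahler function `x ↦ binom(x, m)` on `ℤ_p`, reduced modulo `p` and viewed in a
field `k` of characteristic `p`. -/
noncomputable def bin (m : ℕ) (x : ℤ_[p]) : k :=
  ((ZMod.castHom (dvd_refl p) k).comp PadicInt.toZMod) (Ring.choose x m)

/-- The power series `(1 + T) ^ x = ∑ binom(x, m) T ^ m` over `k`, for a `p`-adic exponent `x`. -/
noncomputable def binSeries (x : ℤ_[p]) : PowerSeries k := PowerSeries.mk fun m => bin k m x

@[simp] lemma coeff_binSeries (m : ℕ) (x : ℤ_[p]) :
    PowerSeries.coeff m (binSeries k x) = bin k m x := by simp [binSeries]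

@[simp] lemma bin_zero (x : ℤ_[p]) : bin k 0 x = 1 := by simp [bin]

lemma bin_natCast (m n : ℕ) : bin k m (n : ℤ_[p]) = (n.choose m : k) := by
  rw [bin, Ring.choose_natCast, map_natCast]

lemma bin_add (m : ℕ) (x y : ℤ_[p]) :
    bin k m (x + y) = ∑ ij ∈ antidiagonal m, bin k ij.1 x * bin k ij.2 y := by
  simp only [bin]
  rw [Ring.add_choose_eq m (Commute.all x y), map_sum]
  simp only [map_mul]

lemma binSeries_add (x y : ℤ_[p]) : binSeries k (x + y) = binSeries k x * binSeries k y := by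
  ext m
  simp [PowerSeries.coeff_mul, bin_add]

lemma binSeries_zero : binSeries k (0 : ℤ_[p]) = 1 := by
  ext m
  have := bin_natCast (p := p) k m 0
  rw [Nat.cast_zero] at this
  rw [coeff_binSeries, this, PowerSeries.coeff_one]
  rcases m with _ | m <;> simp

lemma binSeries_mul_natCast (x : ℤ_[p]) (n : ℕ) : binSeries k (x * (n : ℤ_[p])) = binSeries k x ^ n := by
  induction n with
  | zero => simp [binSeries_zero]
  | succ n ih => rw [Nat.cast_succ, mul_add, mul_one, binSeries_add, ih, pow_succ]

/-- `bin k m` is locally constant, because `binom(·, m)` is continuous on `ℤ_p`. -/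
lemma bin_eventually_eq (m : ℕ) (x : ℤ_[p]) : ∀ᶠ y in 𝓝 x, bin k m y = bin k m x := by
  have h := (PadicInt.continuous_choose (p := p) m).continuousAt (x := x)
  have h1 := h (Metric.ball_mem_nhds _ one_pos)
  filter_upwards [h1] with y hy
  have hy' : ‖Ring.choose y m - Ring.choose x m‖ < 1 := by
    simpa [dist_eq_norm] using hy
  obtain ⟨c, hc⟩ := (PadicInt.norm_lt_one_iff_dvd _).1 hy'
  have : Ring.choose y m = Ring.choose x m + p * c := by rw [← hc]; ring
  simp only [bin, this, map_add, map_mul, map_natCast, CharP.cast_eq_zero, zero_mul, add_zero]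

lemma bin_mul_eventually_eq (m : ℕ) (c x : ℤ_[p]) :
    ∀ᶠ y in 𝓝 x, bin k m (c * y) = bin k m (c * x) :=
  (continuous_const_mul c).continuousAt.eventually (bin_eventually_eq k m (c * x))

/-- Finitely many values of binomial functions at `x` and at `c * x` are attained simultaneously
with a natural number in place of `x`; identities can hence be checked on natural numbers. -/
lemma exists_nat_approx (N : ℕ) (c x : ℤ_[p]) :
    ∃ n : ℕ, (∀ m ≤ N, bin k m (n : ℤ_[p]) = bin k m x) ∧
      ∀ m ≤ N, bin k m (c * (n : ℤ_[p])) = bin k m (c * x) := by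
  have h1 : ∀ᶠ y in 𝓝 x, ∀ m ∈ Set.Iic N, bin k m y = bin k m x :=
    (eventually_all_finite (Set.finite_Iic N)).2 fun m _ => bin_eventually_eq k m x
  have h2 : ∀ᶠ y in 𝓝 x, ∀ m ∈ Set.Iic N, bin k m (c * y) = bin k m (c * x) :=
    (eventually_all_finite (Set.finite_Iic N)).2 fun m _ => bin_mul_eventually_eq k m c x
  obtain ⟨_, ⟨n, rfl⟩, hy1, hy2⟩ :=
    PadicInt.denseRange_natCast.inter_nhds_nonempty (h1.and h2)
  exact ⟨n, hy1, hy2⟩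

/-- The Frobenius identity `(1 + T) ^ (p ^ s * x) = (1 + T ^ p ^ s) ^ x`, read on coefficients. -/
lemma bin_pow_mul (s m : ℕ) (x : ℤ_[p]) :
    bin k m ((p : ℤ_[p]) ^ s * x) = if p ^ s ∣ m then bin k (m / p ^ s) x else 0 := by
  obtain ⟨n, h1, h2⟩ := exists_nat_approx k m ((p : ℤ_[p]) ^ s) x
  rw [← h2 m le_rfl, ← h1 (m / p ^ s) (Nat.div_le_self _ _)]
  rw [show (p : ℤ_[p]) ^ s * (n : ℤ_[p]) = ((p ^ s * n : ℕ) : ℤ_[p]) by push_cast; rfl, bin_natCast,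
    bin_natCast]
  have hp : 0 < p ^ s := pow_pos (Fact.out : p.Prime).pos s
  rw [← Polynomial.coeff_X_add_one_pow k (p ^ s * n) m, ← Polynomial.coeff_X_add_one_pow k n,
    ← Polynomial.coeff_expand hp, pow_mul, add_pow_char_pow]
  simp

/-- The Clebsch–Gordan type expansion of a product of two binomial functions. -/
lemma bin_mul_bin (i j : ℕ) : ∃ c : ℕ → k, ∀ x : ℤ_[p],
    bin k i x * bin k j x = ∑ l ∈ range (i + j + 1), c l * bin k l x := by
  have key : ∀ x : ℤ_[p], bin k i x * bin k j x =
      ∑ ab ∈ antidiagonal i, (j.choose ab.1 : k) * ((ab.2 + j).choose j : k) *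
        bin k (ab.2 + j) x := by
    intro x
    have h : Ring.choose x i * Ring.choose x j = ∑ ab ∈ antidiagonal i,
        (j.choose ab.1 : ℤ_[p]) * ((ab.2 + j).choose j : ℤ_[p]) * Ring.choose x (ab.2 + j) := by
      have e : x = j + (x - j) := by ring
      conv_lhs => rw [e, Ring.add_choose_eq i (Commute.all _ _), ← e, Finset.sum_mul]
      refine Finset.sum_congr rfl fun ab _ => ?_
      have h3 := Ring.choose_smul_choose x (Nat.le_add_left j ab.2)
      rw [Nat.add_sub_cancel, nsmul_eq_mul] at h3
      rw [mul_assoc (j.choose ab.1 : ℤ_[p]), h3, Ring.choose_natCast]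
      ring
    simp only [bin]
    rw [← map_mul, h, map_sum]
    simp only [map_mul, map_natCast]
  refine ⟨fun l => ∑ ab ∈ antidiagonal i with ab.2 + j = l,
    (j.choose ab.1 : k) * ((ab.2 + j).choose j : k), fun x => ?_⟩
  rw [key x, ← Finset.sum_fiberwise_of_maps_to (g := fun ab : ℕ × ℕ => ab.2 + j)
    (t := range (i + j + 1))]
  · refine Finset.sum_congr rfl fun l _ => ?_
    rw [Finset.sum_mul]
    refine Finset.sum_congr rfl fun ab hab => ?_
    rw [(Finset.mem_filter.1 hab).2]
  · intro ab hab
    have := mem_antidiagonal.1 hab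
    simp only [mem_range]
    omega

/-- Expansion of `(1 + T) ^ (x * y) = (1 + Q) ^ y` in powers of `Q = (1 + T) ^ x - 1`. -/
lemma bin_mul_arg (m : ℕ) (x y : ℤ_[p]) :
    bin k m (x * y) = ∑ j ∈ range (m + 1),
      bin k j y * PowerSeries.coeff m ((binSeries k x - 1) ^ j) := by
  obtain ⟨n, h1, h2⟩ := exists_nat_approx k m x y
  rw [← h2 m le_rfl, ← coeff_binSeries, binSeries_mul_natCast]
  have e : ∀ j ∈ range (m + 1), bin k j y * PowerSeries.coeff m ((binSeries k x - 1) ^ j) =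
      PowerSeries.coeff m ((binSeries k x - 1) ^ j * (n.choose j : PowerSeries k)) := by
    intro j hj
    rw [← h1 j (by simpa [Nat.lt_succ_iff] using hj), bin_natCast, mul_comm,
      ← map_natCast (PowerSeries.C (R := k)), PowerSeries.coeff_mul_C]
  rw [Finset.sum_congr rfl e]
  have hQ : PowerSeries.X ∣ binSeries k x - 1 := by
    rw [PowerSeries.X_dvd_iff, ← PowerSeries.coeff_zero_eq_constantCoeff_apply, map_sub,
      coeff_binSeries, bin_zero, PowerSeries.coeff_zero_one, sub_self]
  have hz : ∀ j, m < j → PowerSeries.coeff m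
      ((binSeries k x - 1) ^ j * (n.choose j : PowerSeries k)) = 0 := by
    intro j hj
    exact PowerSeries.X_pow_dvd_iff.1 (((pow_dvd_pow_of_dvd hQ j)).mul_right _) m hj
  conv_lhs => rw [← sub_add_cancel (binSeries k x) 1, add_pow]
  simp only [one_pow, mul_one, map_sum]
  rcases le_total n m with h | h
  · refine Finset.sum_subset (by simpa using h) fun j _ hj => ?_
    rw [Nat.choose_eq_zero_of_lt (by simpa using hj)]
    simp
  · refine (Finset.sum_subset (by simpa using h) fun j _ hj => hz j (by simpa using hj)).symm

/-! ### The degree filtration on functions -/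

section Filtration

variable {Ω τ : Type*} [Fintype τ] (c : τ → Ω → ℤ_[p])

/-- The function `ω ↦ ∏ t, binom(c t ω, m t)` attached to coordinates `c` and a multi-index `m`. -/
noncomputable def binProd (m : τ → ℕ) (ω : Ω) : k := ∏ t, bin k (m t) (c t ω)

/-- The functions of degree `< n` in the coordinates `c`: the `k`-span of the `binProd k c m` with
`∑ t, m t < n`. -/
noncomputable def degLT (n : ℕ) : Submodule k (Ω → k) :=
  Submodule.span k (binProd k c '' {m | ∑ t, m t < n})

lemma degLT_mono {i j : ℕ} (h : i ≤ j) : degLT k c i ≤ degLT k c j :=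
  Submodule.span_mono (Set.image_mono fun _ hm => lt_of_lt_of_le hm h)

lemma binProd_mem {m : τ → ℕ} {n : ℕ} (h : ∑ t, m t < n) : binProd k c m ∈ degLT k c n :=
  Submodule.subset_span ⟨m, h, rfl⟩

lemma one_mem_degLT (n : ℕ) : (1 : Ω → k) ∈ degLT k c (n + 1) := by
  have := binProd_mem k c (m := 0) (n := n + 1) (by simp)
  convert this using 1
  ext ω
  simp [binProd]

lemma bin_coord_mem (t : τ) (m : ℕ) : (fun ω => bin k m (c t ω)) ∈ degLT k c (m + 1) := by
  classical
  have := binProd_mem k c (m := Pi.single t m) (n := m + 1) (by simp)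
  convert this using 1
  ext ω
  rw [binProd, Finset.prod_eq_single t]
  · simp
  · intro t' _ ht'
    simp [Pi.single_eq_of_ne ht']
  · simp

/-- Degrees of products: `< i` and `≤ j - 1` give `< i + j - 1`. -/
lemma mul_mem_degLT {i j n : ℕ} (h : i + j ≤ n + 1) {f g : Ω → k} (hf : f ∈ degLT k c i)
    (hg : g ∈ degLT k c j) : f * g ∈ degLT k c n := by
  classical
  suffices H : degLT k c i * degLT k c j ≤ degLT k c n from H (Submodule.mul_mem_mul hf hg)
  rw [degLT, degLT, Submodule.span_mul_span, Submodule.span_le]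
  rintro _ ⟨_, ⟨m, hm, rfl⟩, _, ⟨m', hm', rfl⟩, rfl⟩
  simp only [Set.mem_ofPred_eq] at hm hm'
  choose a ha using fun t => bin_mul_bin (p := p) k (m t) (m' t)
  have e : binProd k c m * binProd k c m' =
      ∑ x ∈ Fintype.piFinset (fun t => range (m t + m' t + 1)),
        (∏ t, a t (x t)) • binProd k c x := by
    ext ω
    simp only [Pi.mul_apply, binProd, Finset.sum_apply, Pi.smul_apply, smul_eq_mul,
      ← Finset.prod_mul_distrib]
    rw [Finset.prod_congr rfl fun t _ => ha t _, Finset.prod_univ_sum]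
  simp only [SetLike.mem_coe]
  rw [e]
  refine Submodule.sum_mem _ fun x hx => Submodule.smul_mem _ _ (binProd_mem k c ?_)
  have : ∑ t, x t ≤ ∑ t, (m t + m' t) := Finset.sum_le_sum fun t _ => by
    have := Fintype.mem_piFinset.1 hx t
    rw [mem_range] at this
    omega
  rw [Finset.sum_add_distrib] at this
  omega

/-- `v` behaves like a polynomial of degree `≤ e` in the coordinates `c`: each `binom(v, m)` has
degree `≤ e * m`. -/
def HasDeg (e : ℕ) (v : Ω → ℤ_[p]) : Prop :=
  ∀ m, (fun ω => bin k m (v ω)) ∈ degLT k c (e * m + 1)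

lemma hasDeg_coord (t : τ) : HasDeg k c 1 (c t) := fun m => by
  simpa using bin_coord_mem k c t m

lemma HasDeg.add {e : ℕ} {v w : Ω → ℤ_[p]} (hv : HasDeg k c e v) (hw : HasDeg k c e w) :
    HasDeg k c e (v + w) := by
  intro m
  have e1 : (fun ω => bin k m ((v + w) ω)) = ∑ ij ∈ antidiagonal m,
      (fun ω => bin k ij.1 (v ω)) * fun ω => bin k ij.2 (w ω) := by
    ext ω
    simp [bin_add]
  rw [e1]
  refine Submodule.sum_mem _ fun ij hij => mul_mem_degLT k c ?_ (hv _) (hw _)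
  rw [← mem_antidiagonal.1 hij, mul_add]
  omega

lemma hasDeg_zero (e : ℕ) : HasDeg k c e (0 : Ω → ℤ_[p]) := by
  intro m
  have e1 : (fun ω : Ω => bin k m ((0 : Ω → ℤ_[p]) ω)) = ((0 : ℕ).choose m : k) • 1 := by
    ext ω
    simpa using bin_natCast (p := p) k m 0
  rw [e1]
  exact Submodule.smul_mem _ _ (one_mem_degLT k c _)

lemma hasDeg_sum {ι : Type*} {e : ℕ} (s : Finset ι) (v : ι → Ω → ℤ_[p])
    (hv : ∀ i ∈ s, HasDeg k c e (v i)) : HasDeg k c e (∑ i ∈ s, v i) :=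
  Finset.sum_induction v (HasDeg k c e) (fun _ _ => HasDeg.add k c) (hasDeg_zero k c e) hv

/-- The coefficients of `((1 + T) ^ v - 1) ^ j` have at most the degree of those of `(1 + T) ^ v`:
the coefficient of `T ^ m` is a sum of products of `binom(v, i)` with the `i` adding up to `m`. -/
lemma coeff_pow_mem {v : Ω → ℤ_[p]} (hv : HasDeg k c 1 v) (j m : ℕ) :
    (fun ω => PowerSeries.coeff m ((binSeries k (v ω) - 1) ^ j)) ∈ degLT k c (m + 1) := by
  induction j generalizing m with
  | zero =>
    have : (fun ω => PowerSeries.coeff m ((binSeries k (v ω) - 1) ^ 0)) =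
        (PowerSeries.coeff m (1 : PowerSeries k)) • (1 : Ω → k) := by
      ext ω
      simp
    rw [this]
    exact Submodule.smul_mem _ _ (one_mem_degLT k c _)
  | succ j ih =>
    have : (fun ω => PowerSeries.coeff m ((binSeries k (v ω) - 1) ^ (j + 1))) =
        ∑ ab ∈ antidiagonal m,
          (fun ω => PowerSeries.coeff ab.1 ((binSeries k (v ω) - 1) ^ j)) *
            ((fun ω => bin k ab.2 (v ω)) -
              (PowerSeries.coeff ab.2 (1 : PowerSeries k)) • (1 : Ω → k)) := by
      ext ω
      simp only [pow_succ, PowerSeries.coeff_mul, Finset.sum_apply, Pi.mul_apply, Pi.sub_apply,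
        Pi.smul_apply, Pi.one_apply, smul_eq_mul, mul_one, map_sub, coeff_binSeries]
    rw [this]
    refine Submodule.sum_mem _ fun ab hab => mul_mem_degLT k c (i := ab.1 + 1) (j := ab.2 + 1) ?_
      (ih _) (Submodule.sub_mem _ ?_ (Submodule.smul_mem _ _ (one_mem_degLT k c _)))
    · rw [← mem_antidiagonal.1 hab]; omega
    · simpa using hv ab.2

lemma HasDeg.mul {v w : Ω → ℤ_[p]} (hv : HasDeg k c 1 v) (hw : HasDeg k c 1 w) :
    HasDeg k c 2 (v * w) := by
  intro m
  have e1 : (fun ω => bin k m ((v * w) ω)) = ∑ j ∈ range (m + 1),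
      (fun ω => bin k j (w ω)) *
        fun ω => PowerSeries.coeff m ((binSeries k (v ω) - 1) ^ j) := by
    ext ω
    simp [bin_mul_arg]
  rw [e1]
  refine Submodule.sum_mem _ fun j hj => mul_mem_degLT k c ?_ (hw j) (coeff_pow_mem k c hv j m)
  have := mem_range.1 hj
  omega

/-- Multiplying a function of degree `2` by `p ^ s ≥ 3` makes it negligible: `binom(p ^ s v, m)`
has degree `< m` for `m > 0`, by the Frobenius identity. -/
lemma bin_pow_mul_mem {s : ℕ} (hs : 3 ≤ p ^ s) {v : Ω → ℤ_[p]} (hv : HasDeg k c 2 v) {m : ℕ}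
    (hm : m ≠ 0) : (fun ω => bin k m ((p : ℤ_[p]) ^ s * v ω)) ∈ degLT k c m := by
  simp only [bin_pow_mul]
  by_cases h : p ^ s ∣ m
  · obtain ⟨l, rfl⟩ := h
    simp only [dvd_mul_right, if_true]
    rw [Nat.mul_div_cancel_left _ (by omega)]
    refine degLT_mono k c ?_ (hv l)
    have : l ≠ 0 := by rintro rfl; simp at hm
    have := Nat.mul_le_mul_right l hs
    omega
  · simp only [h, if_false]
    exact Submodule.zero_mem _

/-- Perturbing `w` (degree `1`) by `p ^ s * v` (`v` of degree `2`) does not change the leading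
term of `binom(w, m)`. -/
lemma bin_perturb {s : ℕ} (hs : 3 ≤ p ^ s) {v w : Ω → ℤ_[p]} (hv : HasDeg k c 2 v)
    (hw : HasDeg k c 1 w) (m : ℕ) :
    (fun ω => bin k m (w ω + (p : ℤ_[p]) ^ s * v ω)) - (fun ω => bin k m (w ω)) ∈
      degLT k c m := by
  classical
  have e1 : (fun ω => bin k m (w ω + (p : ℤ_[p]) ^ s * v ω)) - (fun ω => bin k m (w ω)) =
      ∑ ij ∈ (antidiagonal m).erase (m, 0),
        (fun ω => bin k ij.1 (w ω)) * fun ω => bin k ij.2 ((p : ℤ_[p]) ^ s * v ω) := by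
    ext ω
    simp only [Pi.sub_apply, Finset.sum_apply, Pi.mul_apply]
    rw [bin_add, ← Finset.sum_erase_add _ _ (show (m, 0) ∈ antidiagonal m by simp)]
    simp
  rw [e1]
  refine Submodule.sum_mem _ fun ij hij => ?_
  obtain ⟨h1, h2⟩ := Finset.mem_erase.1 hij
  have h3 := mem_antidiagonal.1 h2
  have h4 : ij.2 ≠ 0 := by
    intro h0
    exact h1 (Prod.ext (by simp only; omega) h0)
  refine mul_mem_degLT k c ?_ (hw ij.1) (bin_pow_mul_mem k c hs hv h4)
  omega

/-- The multivariate version of `bin_perturb`. -/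
lemma prod_perturb {σ : Type*} {s : ℕ} (hs : 3 ≤ p ^ s) {v w : σ → Ω → ℤ_[p]}
    (hv : ∀ i, HasDeg k c 2 (v i)) (hw : ∀ i, HasDeg k c 1 (w i)) (m : σ → ℕ) (S : Finset σ) :
    (fun ω => ∏ i ∈ S, bin k (m i) (w i ω + (p : ℤ_[p]) ^ s * v i ω)) -
      (fun ω => ∏ i ∈ S, bin k (m i) (w i ω)) ∈ degLT k c (∑ i ∈ S, m i) := by
  classical
  suffices H : (fun ω => ∏ i ∈ S, bin k (m i) (w i ω)) ∈ degLT k c (∑ i ∈ S, m i + 1) ∧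
      (fun ω => ∏ i ∈ S, bin k (m i) (w i ω + (p : ℤ_[p]) ^ s * v i ω)) -
      (fun ω => ∏ i ∈ S, bin k (m i) (w i ω)) ∈ degLT k c (∑ i ∈ S, m i) from H.2
  induction S using Finset.induction_on with
  | empty =>
    simp only [Finset.prod_empty, sub_self, Finset.sum_empty]
    exact ⟨one_mem_degLT k c 0, Submodule.zero_mem _⟩
  | insert i S hi ih =>
    obtain ⟨ih1, ih2⟩ := ih
    simp only [Finset.prod_insert hi, Finset.sum_insert hi]
    have hwi : (fun ω => bin k (m i) (w i ω)) ∈ degLT k c (m i + 1) := by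
      simpa using hw i (m i)
    have hpi := bin_perturb k c hs (hv i) (hw i) (m i)
    refine ⟨mul_mem_degLT k c (by omega) hwi ih1, ?_⟩
    -- `a a' - b b' = (a - b) (a' - b') + (a - b) b' + b (a' - b')`
    have e := Submodule.add_mem _ (Submodule.add_mem _
      (mul_mem_degLT k c (n := m i + ∑ j ∈ S, m j) (by omega) hpi ih2)
      (mul_mem_degLT k c (n := m i + ∑ j ∈ S, m j) (by omega) hpi ih1))
      (mul_mem_degLT k c (n := m i + ∑ j ∈ S, m j) (by omega) hwi ih2)
    convert e using 1
    ext ω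
    simp only [Pi.sub_apply, Pi.mul_apply, Pi.add_apply]
    ring

end Filtration

/-! ### Pairing the group algebra with functions -/

section Pairing

variable {G : Type*}

/-- The pairing of `a ∈ k[G]` with a function `f : G → k`, namely `∑ g, a g * f g`. -/
noncomputable def pairing (a : MonoidAlgebra k G) : (G → k) →ₗ[k] k where
  toFun f := a.coeff.sum fun g r => r * f g
  map_add' f f' := by simp [mul_add, Finsupp.sum_add]
  map_smul' r f := by simp [Finsupp.mul_sum, mul_left_comm]

/-- The pairing of `a ⊗ b` with a function on `G × G`. -/
noncomputable def pairing₂ (a b : MonoidAlgebra k G) : (G × G → k) →ₗ[k] k where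
  toFun F := a.coeff.sum fun g r => b.coeff.sum fun h r' => r * r' * F (g, h)
  map_add' f f' := by simp [mul_add, Finsupp.sum_add]
  map_smul' r f := by simp [Finsupp.mul_sum, mul_left_comm]

lemma pairing_mul [Monoid G] (a b : MonoidAlgebra k G) (f : G → k) :
    pairing k (a * b) f = pairing₂ k a b fun gh => f (gh.1 * gh.2) := by
  have e : ∀ x : MonoidAlgebra k G, pairing k x f = Finsupp.linearCombination k f x.coeff := by
    intro x
    simp [pairing, Finsupp.linearCombination_apply]
  rw [e, MonoidAlgebra.mul_def]
  simp only [MonoidAlgebra.coeff_finsuppSum, map_finsuppSum, MonoidAlgebra.coeff_single,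
    Finsupp.linearCombination_single, smul_eq_mul, pairing₂, LinearMap.coe_mk, AddHom.coe_mk]

lemma pairing₂_mul (a b : MonoidAlgebra k G) (f f' : G → k) :
    pairing₂ k a b (fun gh => f gh.1 * f' gh.2) = pairing k a f * pairing k b f' := by
  simp only [pairing₂, pairing, LinearMap.coe_mk, AddHom.coe_mk, Finsupp.sum, Finset.sum_mul_sum]
  refine Finset.sum_congr rfl fun g _ => Finset.sum_congr rfl fun h _ => by ring

/-- If functions `b m` on `G`, indexed by multi-indices, separate the elements of `k[G]` and
satisfy `b m (g h) = ∑_{i + j = m} b i g * b j h` up to terms `b i g * b j h` with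
`|i| + |j| < |m|`, then the lowest-degree part of `a ↦ ∑ m, ⟨a, b m⟩ T ^ m ∈ k⟦T⟧` is
multiplicative, and `k[G]` inherits the absence of zero divisors from `k⟦T⟧`. -/
theorem noZeroDivisors_of_leading [Monoid G] {σ : Type*} [DecidableEq σ] (b : (σ →₀ ℕ) → G → k)
    (hsep : ∀ a : MonoidAlgebra k G, (∀ m, pairing k a (b m) = 0) → a = 0)
    (hmul : ∀ m : σ →₀ ℕ, (fun gh : G × G => b m (gh.1 * gh.2)) -
      (fun gh => ∑ ij ∈ antidiagonal m, b ij.1 gh.1 * b ij.2 gh.2) ∈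
      Submodule.span k {F : G × G → k | ∃ i j : σ →₀ ℕ, i.degree + j.degree < m.degree ∧
        F = fun gh => b i gh.1 * b j gh.2}) :
    NoZeroDivisors (MonoidAlgebra k G) := by
  let Φ : MonoidAlgebra k G → MvPowerSeries σ k := fun a m => pairing k a (b m)
  have hΦc : ∀ a m, MvPowerSeries.coeff m (Φ a) = pairing k a (b m) := fun a m => rfl
  have hΦ : ∀ a, a ≠ 0 → Φ a ≠ 0 := by
    intro a ha h
    refine ha (hsep a fun m => ?_)
    rw [← hΦc, h, map_zero]
  refine ⟨fun {x y} hxy => ?_⟩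
  by_contra hne
  push Not at hne
  obtain ⟨hx, hy⟩ := hne
  have hprod : Φ x * Φ y ≠ 0 := mul_ne_zero (hΦ x hx) (hΦ y hy)
  obtain ⟨m, hm, hdeg⟩ := MvPowerSeries.exists_coeff_ne_zero_and_order
    (MvPowerSeries.ne_zero_iff_order_finite.1 hprod)
  rw [MvPowerSeries.order_mul] at hdeg
  apply hm
  rw [MvPowerSeries.coeff_mul]
  have h1 : ∀ F ∈ Submodule.span k {F : G × G → k | ∃ i j : σ →₀ ℕ,
      i.degree + j.degree < m.degree ∧ F = fun gh => b i gh.1 * b j gh.2},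
      pairing₂ k x y F = 0 := by
    intro F hF
    have : Submodule.span k {F : G × G → k | ∃ i j : σ →₀ ℕ,
      i.degree + j.degree < m.degree ∧ F = fun gh => b i gh.1 * b j gh.2} ≤
      LinearMap.ker (pairing₂ k x y) := by
      rw [Submodule.span_le]
      rintro _ ⟨i, j, hij, rfl⟩
      simp only [SetLike.mem_coe, LinearMap.mem_ker]
      rw [pairing₂_mul, ← hΦc, ← hΦc]
      -- either `i` lies below the order of `Φ x` or `j` below that of `Φ y`
      rcases lt_or_ge (i.degree : ℕ∞) (Φ x).order with h | h
      · rw [MvPowerSeries.coeff_of_lt_order h, zero_mul]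
      rcases lt_or_ge (j.degree : ℕ∞) (Φ y).order with h' | h'
      · rw [MvPowerSeries.coeff_of_lt_order h', mul_zero]
      exfalso
      have h2 := add_le_add h h'
      rw [← hdeg] at h2
      have h3 : m.degree ≤ i.degree + j.degree := by exact_mod_cast h2
      omega
    exact this hF
  have h2 := h1 _ (hmul m)
  rw [map_sub, ← pairing_mul, hxy, sub_eq_zero] at h2
  have h3 : pairing k (0 : MonoidAlgebra k G) (b m) = 0 := by simp [pairing]
  rw [h3] at h2
  have h4 : (fun gh : G × G => ∑ ij ∈ antidiagonal m, b ij.1 gh.1 * b ij.2 gh.2) =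
      ∑ ij ∈ antidiagonal m, fun gh : G × G => b ij.1 gh.1 * b ij.2 gh.2 := by
    ext gh
    simp
  rw [h4, map_sum] at h2
  rw [h2]
  exact Finset.sum_congr rfl fun ij _ => by rw [pairing₂_mul, hΦc, hΦc]

end Pairing

/-! ### Separation of points and the criterion for a group with coordinates in `ℤ_p` -/

section Coordinates

variable {σ : Type*} [Fintype σ] [DecidableEq σ]

/-- The multivariate Vandermonde identity. -/
lemma prod_bin_add (m : σ →₀ ℕ) (x y : σ → ℤ_[p]) :
    ∏ i, bin k (m i) (x i + y i) = ∑ ij ∈ antidiagonal m,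
      (∏ i, bin k (ij.1 i) (x i)) * ∏ i, bin k (ij.2 i) (y i) := by
  simp only [bin_add]
  rw [Finset.prod_univ_sum]
  refine Finset.sum_bij'
    (fun f _ => (Finsupp.equivFunOnFinite.symm fun i => (f i).1,
      Finsupp.equivFunOnFinite.symm fun i => (f i).2))
    (fun ij _ i => (ij.1 i, ij.2 i)) ?_ ?_ ?_ ?_ ?_
  · intro f hf
    rw [HasAntidiagonal.mem_antidiagonal]
    ext i
    simpa using mem_antidiagonal.1 (Fintype.mem_piFinset.1 hf i)
  · intro ij hij
    rw [Fintype.mem_piFinset]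
    intro i
    rw [HasAntidiagonal.mem_antidiagonal, ← mem_antidiagonal.1 hij]
    rfl
  · intro f _
    rfl
  · intro ij _
    ext <;> rfl
  · intro f _
    simp [Finset.prod_mul_distrib]

lemma bin_top (s r : ℕ) (z : ℤ_[p]) :
    bin k (p ^ s - 1) ((r : ℤ_[p]) + (p : ℤ_[p]) ^ s * z) = (r.choose (p ^ s - 1) : k) := by
  have hp : 0 < p ^ s := pow_pos (Fact.out : p.Prime).pos s
  rw [bin_add, Finset.sum_eq_single (p ^ s - 1, 0)]
  · simp [bin_natCast]
  · intro ij hij hne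
    have h := mem_antidiagonal.1 hij
    have h0 : ij.2 ≠ 0 := fun h0 => hne (Prod.ext (by simp only; omega) h0)
    rw [bin_pow_mul, if_neg, mul_zero]
    intro hd
    have := Nat.le_of_dvd (Nat.pos_of_ne_zero h0) hd
    omega
  · simp

/-- `binom(·, p ^ s - 1)` modulo `p` vanishes outside the residue class of `-1` modulo `p ^ s`. -/
lemma bin_top_eq_zero {s : ℕ} {y : ℤ_[p]} (h : ¬ (p : ℤ_[p]) ^ s ∣ y + 1) :
    bin k (p ^ s - 1) y = 0 := by
  have hp : 0 < p ^ s := pow_pos (Fact.out : p.Prime).pos s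
  obtain ⟨z, hz⟩ := Ideal.mem_span_singleton.1 (PadicInt.appr_spec s y)
  have hy : y = (y.appr s : ℤ_[p]) + (p : ℤ_[p]) ^ s * z := by rw [← hz]; ring
  have hlt := PadicInt.appr_lt y s
  have hne : y.appr s ≠ p ^ s - 1 := by
    intro e
    refine h ⟨1 + z, ?_⟩
    rw [hy, e, Nat.cast_sub hp]
    push_cast
    ring
  rw [hy, bin_top, Nat.choose_eq_zero_of_lt (by omega), Nat.cast_zero]

lemma bin_top_neg_one (s : ℕ) : bin k (p ^ s - 1) (-1 : ℤ_[p]) = 1 := by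
  have hp : 0 < p ^ s := pow_pos (Fact.out : p.Prime).pos s
  have e : (-1 : ℤ_[p]) = ((p ^ s - 1 : ℕ) : ℤ_[p]) + (p : ℤ_[p]) ^ s * (-1) := by
    rw [Nat.cast_sub hp]
    push_cast
    ring
  rw [e, bin_top, Nat.choose_self, Nat.cast_one]

lemma exists_pow_not_dvd {z : ℤ_[p]} (hz : z ≠ 0) : ∃ s : ℕ, ¬ (p : ℤ_[p]) ^ s ∣ z := by
  refine ⟨z.valuation + 1, fun h => ?_⟩
  have := (PadicInt.mem_span_pow_iff_le_valuation z hz _).1 (Ideal.mem_span_singleton.2 h)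
  omega

/-- Binomial functions in injective coordinates separate the elements of the group algebra: a
translate of `∏ i, binom(·, p ^ s - 1)` isolates any given point of a finite set. -/
lemma pairing_separating {G : Type*} {c : G → σ → ℤ_[p]} (hc : Function.Injective c)
    (a : MonoidAlgebra k G)
    (ha : ∀ m : σ →₀ ℕ, pairing k a (fun g => ∏ i, bin k (m i) (c g i)) = 0) : a = 0 := by
  classical
  by_contra hne
  have hne' : a.coeff ≠ 0 := by simpa using hne
  obtain ⟨g₀, hg₀⟩ := Finsupp.ne_iff.1 hne'
  have h1 : ∀ g, ∃ s : ℕ, g ≠ g₀ → ∃ i, ¬ (p : ℤ_[p]) ^ s ∣ c g i - c g₀ i := by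
    intro g
    by_cases hg : g = g₀
    · exact ⟨0, fun h => absurd hg h⟩
    · obtain ⟨i, hi⟩ := Function.ne_iff.1 (hc.ne hg)
      obtain ⟨s, hs⟩ := exists_pow_not_dvd (sub_ne_zero.2 hi)
      exact ⟨s, fun _ => ⟨i, hs⟩⟩
  choose s hs using h1
  let S := a.coeff.support.sup s
  have hS : ∀ g ∈ a.coeff.support, g ≠ g₀ → ∃ i, ¬ (p : ℤ_[p]) ^ S ∣ c g i - c g₀ i := by
    intro g hg hgne
    obtain ⟨i, hi⟩ := hs g hgne
    exact ⟨i, fun hd => hi ((pow_dvd_pow _ (Finset.le_sup hg)).trans hd)⟩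
  let M : σ →₀ ℕ := Finsupp.equivFunOnFinite.symm fun _ => p ^ S - 1
  have hF : pairing k a (fun g => ∏ i, bin k (M i) (c g i + (-c g₀ i - 1))) = 0 := by
    have e : (fun g => ∏ i, bin k (M i) (c g i + (-c g₀ i - 1))) =
        ∑ ij ∈ antidiagonal M, (∏ i, bin k (ij.2 i) (-c g₀ i - 1)) •
          fun g => ∏ i, bin k (ij.1 i) (c g i) := by
      ext g
      rw [prod_bin_add k M (c g) fun i => -c g₀ i - 1]
      simp [mul_comm]
    rw [e, map_sum]
    refine Finset.sum_eq_zero fun ij _ => ?_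
    rw [map_smul, ha, smul_zero]
  have hM : ∀ i, M i = p ^ S - 1 := fun i => rfl
  simp only [pairing, LinearMap.coe_mk, AddHom.coe_mk, Finsupp.sum, hM] at hF
  rw [Finset.sum_eq_single g₀] at hF
  · have e : ∀ i, c g₀ i + (-c g₀ i - 1) = -1 := fun i => by ring
    simp only [e, bin_top_neg_one, Finset.prod_const_one, mul_one] at hF
    exact hg₀ hF
  · intro g hg hgne
    obtain ⟨i, hi⟩ := hS g hg hgne
    rw [Finset.prod_eq_zero (Finset.mem_univ i), mul_zero]
    refine bin_top_eq_zero k fun hd => hi ?_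
    convert hd using 1
    ring
  · intro h
    simp [Finsupp.notMem_support_iff.1 h]

/-- The coordinates on `G × G` induced by coordinates `c` on `G`. -/
def coords₂ {G : Type*} (c : G → σ → ℤ_[p]) : σ ⊕ σ → G × G → ℤ_[p] :=
  Sum.elim (fun i gh => c gh.1 i) (fun i gh => c gh.2 i)

/-- If a monoid has injective coordinates in `ℤ_p` in which the multiplication reads
`x + y + p ^ u * v(x, y)` with `v` of degree `2` and `p ^ u ≥ 3`, then its monoid algebra in
characteristic `p` has no zero divisors. -/
theorem noZeroDivisors_of_coordinates {G : Type*} [Monoid G] {c : G → σ → ℤ_[p]}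
    (hc : Function.Injective c) {u : ℕ} (hu : 3 ≤ p ^ u) (v : σ → G × G → ℤ_[p])
    (hv : ∀ i, HasDeg k (coords₂ c) 2 (v i))
    (hmul : ∀ g h i, c (g * h) i = c g i + c h i + (p : ℤ_[p]) ^ u * v i (g, h)) :
    NoZeroDivisors (MonoidAlgebra k G) := by
  refine noZeroDivisors_of_leading k (fun m g => ∏ i, bin k (m i) (c g i))
    (pairing_separating k hc) fun m => ?_
  have hw : ∀ i, HasDeg k (coords₂ c) 1 fun gh : G × G => c gh.1 i + c gh.2 i := fun i =>
    HasDeg.add k _ (hasDeg_coord k (coords₂ c) (Sum.inl i)) (hasDeg_coord k (coords₂ c) (Sum.inr i))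
  have key := prod_perturb k (coords₂ c) hu hv hw m univ
  simp only [hmul, ← prod_bin_add]
  refine Submodule.span_mono ?_ key
  rintro _ ⟨n, hn, rfl⟩
  simp only [Set.mem_ofPred_eq, Fintype.sum_sum_type] at hn
  refine ⟨Finsupp.equivFunOnFinite.symm fun i => n (Sum.inl i),
    Finsupp.equivFunOnFinite.symm fun i => n (Sum.inr i), ?_, ?_⟩
  · simpa [Finsupp.degree_eq_sum] using hn
  · ext gh
    simp [binProd, Fintype.prod_sum_type, coords₂]

end Coordinates

/-! ### Congruence subgroups -/

section Congruence

/-- Elements of `CS(u, d, p)` have the form `1 + p ^ u * x` for a matrix `x`. -/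
lemma exists_coord (u d : ℕ) (g : CS p u d) : ∃ x : Fin d × Fin d → ℤ_[p], ∀ i j,
    (g : (Matrix (Fin d) (Fin d) ℤ_[p])ˣ).1 i j =
      (1 : Matrix (Fin d) (Fin d) ℤ_[p]) i j + (p : ℤ_[p]) ^ u * x (i, j) := by
  have hg : csRed p u d g.1 = 1 := g.2
  have h : ∀ ij : Fin d × Fin d, ∃ y : ℤ_[p], (g : (Matrix (Fin d) (Fin d) ℤ_[p])ˣ).1 ij.1 ij.2 -
      (1 : Matrix (Fin d) (Fin d) ℤ_[p]) ij.1 ij.2 = (p : ℤ_[p]) ^ u * y := by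
    rintro ⟨i, j⟩
    have h0 := congrArg Units.val hg
    have h1 := congrFun (congrFun h0 i) j
    refine Ideal.mem_span_singleton.1 ((Ideal.Quotient.eq).1 ?_)
    simp only [csRed, Units.coe_map, Units.val_one] at h1
    refine h1.trans ?_
    simp only [Matrix.one_apply]
    split_ifs <;> simp
  choose x hx using h
  exact ⟨x, fun i j => by rw [← hx (i, j)]; ring⟩

end Congruence

end CongruenceDomain

/-- If `Γ = CS(u,d,p)` (with `u ≥ 2` when `p = 2`) and `k` is a field of characteristic `p`,
then the group algebra `k[Γ]` is a domain. -/
theorem charP_groupAlgebra_congruenceSubgroup_isDomain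
    (p : ℕ) [Fact p.Prime] (u d : ℕ) (hu : 0 < u) (hd : 0 < d) (h2 : p = 2 → 2 ≤ u)
    (k : Type*) [Field k] [CharP k p] :
    IsDomain (MonoidAlgebra k ↥(CS p u d)) := by
  classical
  have hpp : p.Prime := Fact.out
  have hq : 3 ≤ p ^ u := by
    rcases hpp.eq_two_or_odd' with h | h
    · calc 3 ≤ 2 ^ 2 := by norm_num
        _ ≤ p ^ u := by rw [h]; exact Nat.pow_le_pow_right (by norm_num) (h2 h)
    · have h3 : p ≠ 2 := by rintro rfl; exact absurd h (by decide)
      have := hpp.two_le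
      calc 3 ≤ p := by omega
        _ ≤ p ^ u := Nat.le_self_pow hu.ne' p
  have hp0 : (p : ℤ_[p]) ^ u ≠ 0 := pow_ne_zero _ (Nat.cast_ne_zero.2 hpp.ne_zero)
  choose c hc using CongruenceDomain.exists_coord (p := p) u d
  have hinj : Function.Injective c := by
    intro g h hgh
    refine Subtype.ext (Units.ext ?_)
    ext i j
    rw [hc g, hc h, hgh]
  let v : Fin d × Fin d → CS p u d × CS p u d → ℤ_[p] := fun ij =>
    ∑ l, (fun gh => c gh.1 (ij.1, l)) * fun gh => c gh.2 (l, ij.2)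
  have hv : ∀ ij, CongruenceDomain.HasDeg k (CongruenceDomain.coords₂ c) 2 (v ij) := fun ij =>
    CongruenceDomain.hasDeg_sum k _ _ _ fun l _ => CongruenceDomain.HasDeg.mul k _
      (CongruenceDomain.hasDeg_coord k (CongruenceDomain.coords₂ c) (Sum.inl (ij.1, l)))
      (CongruenceDomain.hasDeg_coord k (CongruenceDomain.coords₂ c) (Sum.inr (l, ij.2)))
  have hmul : ∀ g h ij, c (g * h) ij = c g ij + c h ij + (p : ℤ_[p]) ^ u * v ij (g, h) := by
    rintro g h ⟨i, j⟩
    have hmat : ∀ g : CS p u d, (g : (Matrix (Fin d) (Fin d) ℤ_[p])ˣ).1 =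
        1 + (p : ℤ_[p]) ^ u • Matrix.of fun i j => c g (i, j) := by
      intro g
      ext i j
      rw [hc g i j]
      simp
    have e : (g * h : CS p u d).1.1 = g.1.1 * h.1.1 := rfl
    have e2 := congrFun (congrFun e i) j
    rw [hc (g * h), hmat g, hmat h] at e2
    apply mul_left_cancel₀ hp0
    simp only [add_mul, mul_add, one_mul, mul_one, Matrix.smul_mul, Matrix.mul_smul] at e2
    simp only [Matrix.add_apply, Matrix.smul_apply, Matrix.mul_apply, Matrix.of_apply,
      smul_eq_mul] at e2
    simp only [v, Finset.sum_apply, Pi.mul_apply]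
    linear_combination e2
  have := CongruenceDomain.noZeroDivisors_of_coordinates k hinj hq v hv hmul
  exact NoZeroDivisors.to_isDomain _
end

section
/- Let p be a prime, d and u positive integers (with u ≥ 2 if p = 2), and let Γ = CS(u,d,p). If K is any field of characteristic 0, then the group algebra K[Γ] is a domain. -/
open Finset

/-! ### Binomial coefficients of `p`-adic integers -/

section Binomial
variable {p : ℕ} [Fact p.Prime] {k : Type*} [Field k] (ρ : ℤ_[p] →+* k)

theorem choose_add_eq_sum (x y : ℤ_[p]) (n : ℕ) : Ring.choose (x + y) n =
    ∑ ab ∈ antidiagonal n, Ring.choose x ab.1 * Ring.choose y ab.2 :=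
  Ring.add_choose_eq n (Commute.all x y)

/-- Lucas' congruence: modulo `p`, the coefficients of `(1 + X)^(p^t z)` are those of
`(1 + X^(p^t))^z`. For `z ∈ ℕ` this is the Frobenius; the general case follows by density. -/
theorem choose_mul_pow_reduction (hρ : ρ p = 0) (t : ℕ) (z : ℤ_[p]) (c : ℕ) :
    ρ (Ring.choose ((p : ℤ_[p]) ^ t * z) c) =
      if p ^ t ∣ c then ρ (Ring.choose z (c / p ^ t)) else 0 := by
  have hpt : 0 < p ^ t := pow_pos (Fact.out : p.Prime).pos t
  have key : (p : ℤ_[p]) ∣ Ring.choose ((p : ℤ_[p]) ^ t * z) c -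
      (if p ^ t ∣ c then Ring.choose z (c / p ^ t) else 0) := by
    induction z using PadicInt.denseRange_natCast.induction_on with
    | ih n =>
      have h1 : ((((p ^ t * n).choose c : ℕ) : ZMod p)) =
          if p ^ t ∣ c then ((n.choose (c / p ^ t) : ℕ) : ZMod p) else 0 := by
        have h2 : ((1 + Polynomial.X : Polynomial (ZMod p)) ^ (p ^ t * n)).coeff c =
            (Polynomial.expand (ZMod p) (p ^ t) ((1 + Polynomial.X) ^ n)).coeff c := by
          rw [pow_mul, add_pow_char_pow, map_pow, map_add, Polynomial.expand_X, map_one, one_pow]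
        rw [Polynomial.coeff_expand hpt] at h2
        simpa [Polynomial.coeff_one_add_X_pow] using h2
      have h3 : ((p : ℤ) ∣ ((p ^ t * n).choose c : ℕ) -
          (if p ^ t ∣ c then ((n.choose (c / p ^ t) : ℕ) : ℤ) else 0)) := by
        rw [← ZMod.intCast_zmod_eq_zero_iff_dvd]
        push_cast
        rw [h1]
        split_ifs <;> simp
      have h4 := map_dvd (Int.castRingHom ℤ_[p]) h3
      have h5 : (p : ℤ_[p]) ^ t * n = ((p ^ t * n : ℕ) : ℤ_[p]) := by push_cast; rfl
      rw [h5, Ring.choose_natCast, Ring.choose_natCast]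
      convert h4 using 1
      · simp
      · split_ifs <;> simp
    | hp =>
      have h6 : ∀ w : ℤ_[p], (p : ℤ_[p]) ∣ w ↔ ‖w‖ ≤ (p : ℝ) ^ (-((1 : ℕ) : ℤ)) := fun w => by
        rw [PadicInt.norm_le_pow_iff_mem_span_pow, pow_one, Ideal.mem_span_singleton]
      simp_rw [h6]
      refine isClosed_le (Continuous.norm (Continuous.sub ?_ ?_)) continuous_const
      · exact (PadicInt.continuous_choose c).comp (by fun_prop)
      · split_ifs
        · exact PadicInt.continuous_choose _
        · exact continuous_const
  obtain ⟨w, hw⟩ := key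
  have := congrArg ρ hw
  rw [map_sub, map_mul, hρ, zero_mul, sub_eq_zero] at this
  rw [this]
  split_ifs <;> simp

/-- Linearisation of a product of two binomial coefficients in the same variable: expand
`choose x b` by Vandermonde at `x = (x - a) + a`. -/
theorem choose_mul_choose {x : ℤ_[p]} (a b : ℕ) :
    Ring.choose x a * Ring.choose x b = ∑ j ∈ range (b + 1),
      ((a.choose (b - j) * (a + j).choose a : ℕ) : ℤ_[p]) * Ring.choose x (a + j) := by
  have h : Ring.choose x b = ∑ j ∈ range (b + 1),
      Ring.choose (x - a) j * ((a.choose (b - j) : ℕ) : ℤ_[p]) := by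
    have := Ring.add_choose_eq (r := x - a) (s := (a : ℤ_[p])) b (Commute.all _ _)
    rw [sub_add_cancel, Nat.sum_antidiagonal_eq_sum_range_succ_mk] at this
    simpa [Ring.choose_natCast] using this
  rw [h, mul_sum]
  refine sum_congr rfl fun j _ => ?_
  have h2 := Ring.choose_add_smul_choose (x - (a : ℤ_[p])) j a
  rw [sub_add_cancel, nsmul_eq_mul, add_comm j a] at h2
  push_cast
  rw [← mul_assoc, ← h2]
  ring

/-- The power series `(1 + X)^y - 1` over `ℤ_p`. -/
noncomputable def binomTail (y : ℤ_[p]) : PowerSeries ℤ_[p] :=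
  PowerSeries.binomialSeries ℤ_[p] y - 1

theorem coeff_binomTail (y : ℤ_[p]) (e : ℕ) : PowerSeries.coeff e (binomTail y) =
    if e = 0 then 0 else Ring.choose y e := by
  rw [binomTail, map_sub, PowerSeries.binomialSeries_coeff, PowerSeries.coeff_one]
  split_ifs with h
  · simp [h]
  · simp

theorem coeff_binomTail_pow_eq_zero (y : ℤ_[p]) {e i : ℕ} (h : e < i) :
    PowerSeries.coeff e (binomTail y ^ i) = 0 := by
  have : (PowerSeries.X : PowerSeries ℤ_[p]) ∣ binomTail y := by
    rw [PowerSeries.X_dvd_iff, ← PowerSeries.coeff_zero_eq_constantCoeff_apply, coeff_binomTail]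
    simp
  exact PowerSeries.X_pow_dvd_iff.1 (pow_dvd_pow_of_dvd this i) e h

/-- The coefficient of `X^e` in `(1 + X)^(x y) = (1 + ((1 + X)^y - 1))^x`; by density of `ℕ`
it suffices to take `x ∈ ℕ`. -/
theorem choose_mul_eq_sum (x y : ℤ_[p]) (e : ℕ) :
    Ring.choose (x * y) e = ∑ i ∈ range (e + 1),
      Ring.choose x i * PowerSeries.coeff e (binomTail y ^ i) := by
  induction x using PadicInt.denseRange_natCast.induction_on with
  | ih n =>
    have h1 : ∀ n : ℕ, PowerSeries.binomialSeries ℤ_[p] ((n : ℤ_[p]) * y) =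
        (binomTail y + 1) ^ n := by
      intro n
      induction n with
      | zero => simp
      | succ n ih =>
        rw [pow_succ, ← ih, Nat.cast_succ, add_mul, one_mul, PowerSeries.binomialSeries_add]
        simp [binomTail]
    have h2 := congrArg (PowerSeries.coeff e) (h1 n)
    rw [PowerSeries.binomialSeries_coeff, add_pow, map_sum] at h2
    simp only [smul_eq_mul, mul_one, one_pow] at h2
    rw [h2]
    simp_rw [Ring.choose_natCast]
    have h3 : ∀ i, PowerSeries.coeff e (binomTail y ^ i * ((n.choose i : ℕ) : PowerSeries ℤ_[p])) =
        (n.choose i : ℤ_[p]) * PowerSeries.coeff e (binomTail y ^ i) := by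
      intro i
      rw [← map_natCast (PowerSeries.C (R := ℤ_[p])), PowerSeries.coeff_mul_C, mul_comm]
    simp_rw [h3]
    -- Both sums extend by zero to a common range.
    rw [sum_subset (range_subset_range.2 (le_max_left (n + 1) (e + 1))),
      sum_subset (range_subset_range.2 (le_max_right (n + 1) (e + 1)))]
    · intro i _ hi
      rw [coeff_binomTail_pow_eq_zero y (by have := mem_range.not.1 hi; omega), mul_zero]
    · intro i _ hi
      rw [Nat.choose_eq_zero_of_lt (by have := mem_range.not.1 hi; omega), Nat.cast_zero,
        zero_mul]
  | hp =>
    refine isClosed_eq ((PadicInt.continuous_choose e).comp (by fun_prop)) ?_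
    exact continuous_finsetSum _ fun i _ => (PadicInt.continuous_choose i).mul continuous_const

/-- The reductions of the binomial coefficients separate the points of `ℤ_p`. If they agree at
`x` and `y`, then by Vandermonde they vanish in positive degree at `x - y = p^t w`; but
`choose (p^t w) (p^t)` reduces to `w`, a unit. -/
theorem exists_choose_ne (hρ : ρ p = 0) {x y : ℤ_[p]} (hxy : x ≠ y) :
    ∃ c, ρ (Ring.choose x c) ≠ ρ (Ring.choose y c) := by
  by_contra! H
  have hz : ∀ c, c ≠ 0 → ρ (Ring.choose (x - y) c) = 0 := by
    intro c hc
    have h1 := Ring.add_choose_eq (r := x) (s := -y) c (Commute.all _ _)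
    have h2 := Ring.add_choose_eq (r := y) (s := -y) c (Commute.all _ _)
    rw [← sub_eq_add_neg] at h1
    rw [add_neg_cancel, Ring.choose_zero_pos _ (Nat.pos_of_ne_zero hc)] at h2
    have h3 := congrArg ρ h2
    rw [h1, map_sum]
    rw [map_zero, map_sum] at h3
    rw [h3]
    simp_rw [map_mul, H]
  have hne : x - y ≠ 0 := sub_ne_zero.2 hxy
  obtain ⟨t, w, hw⟩ : ∃ (t : ℕ) (w : ℤ_[p]ˣ), x - y = (p : ℤ_[p]) ^ t * w :=
    ⟨_, _, (PadicInt.unitCoeff_spec hne).trans (mul_comm _ _)⟩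
  have hpt : p ^ t ≠ 0 := pow_ne_zero _ (Fact.out : p.Prime).ne_zero
  have h := hz (p ^ t) hpt
  rw [hw, choose_mul_pow_reduction ρ hρ, if_pos dvd_rfl, Nat.div_self (Nat.pos_of_ne_zero hpt),
    Ring.choose_one_right] at h
  exact (w.isUnit.map ρ).ne_zero h
end Binomial

/-! ### Functions of bounded degree on `ℤ_p^σ` -/

section Filtration
variable {p : ℕ} [Fact p.Prime] {k : Type*} [Field k] (ρ : ℤ_[p] →+* k)
variable {σ : Type*} [Fintype σ]

/-- The function `x ↦ ∏ s, choose (x s) (α s)` on `ℤ_p^σ`, reduced along `ρ`. -/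
noncomputable def binomFun (α : σ →₀ ℕ) : (σ → ℤ_[p]) → k :=
  fun x => ∏ s, ρ (Ring.choose (x s) (α s))

/-- The functions on `ℤ_p^σ` of degree `< n`: the span of the `binomFun ρ α` with `|α| < n`.
The strict inequality makes `degLT ρ σ 0` the zero space. -/
noncomputable def degLT (σ : Type*) [Fintype σ] (n : ℕ) : Submodule k ((σ → ℤ_[p]) → k) :=
  Submodule.span k {f | ∃ α : σ →₀ ℕ, α.degree < n ∧ binomFun ρ α = f}

variable {ρ}

theorem binomFun_mem {α : σ →₀ ℕ} {n : ℕ} (h : α.degree < n) : binomFun ρ α ∈ degLT ρ σ n :=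
  Submodule.subset_span ⟨α, h, rfl⟩

theorem degLT_mono {m n : ℕ} (h : m ≤ n) : degLT ρ σ m ≤ degLT ρ σ n :=
  Submodule.span_mono fun _ ⟨α, hα, e⟩ => ⟨α, hα.trans_le h, e⟩

theorem one_mem_degLT : (fun _ => 1 : (σ → ℤ_[p]) → k) ∈ degLT ρ σ 1 := by
  have : binomFun ρ (0 : σ →₀ ℕ) = fun _ => 1 := by
    funext x; simp [binomFun]
  rw [← this]
  exact binomFun_mem (by simp)

theorem binomFun_mul_mem (α β : σ →₀ ℕ) :
    binomFun ρ α * binomFun ρ β ∈ degLT ρ σ (α.degree + β.degree + 1) := by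
  classical
  have : binomFun ρ α * binomFun ρ β =
      ∑ j ∈ Fintype.piFinset (fun s => range (β s + 1)),
        (∏ s, (((α s).choose (β s - j s) * (α s + j s).choose (α s) : ℕ) : k)) •
          binomFun ρ (Finsupp.equivFunOnFinite.symm fun s => α s + j s) := by
    funext x
    simp only [Pi.mul_apply, binomFun, Finset.sum_apply, Pi.smul_apply, smul_eq_mul,
      ← prod_mul_distrib, ← map_mul, choose_mul_choose, map_sum]
    rw [prod_univ_sum]
    simp
  rw [this]
  refine Submodule.sum_mem _ fun j hj => Submodule.smul_mem _ _ (binomFun_mem ?_)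
  rw [Fintype.mem_piFinset] at hj
  simp only [Finsupp.degree_eq_sum, Finsupp.equivFunOnFinite_symm_apply_apply, sum_add_distrib]
  have : ∑ s, j s ≤ ∑ s, β s :=
    sum_le_sum fun s _ => Nat.lt_succ_iff.1 (mem_range.1 (hj s))
  omega

/-- Degrees add under multiplication. With the strict convention of `degLT`, a product of
functions of degrees `< a` and `< b` has degree `< a + b - 1`. -/
theorem mul_mem_degLT {a b n : ℕ} {f g : (σ → ℤ_[p]) → k} (hf : f ∈ degLT ρ σ a)
    (hg : g ∈ degLT ρ σ b) (h : a + b ≤ n + 1) : f * g ∈ degLT ρ σ n := by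
  induction hf, hg using Submodule.span_induction₂ with
  | mem_mem f g hf hg =>
    obtain ⟨α, hα, rfl⟩ := hf
    obtain ⟨β, hβ, rfl⟩ := hg
    exact degLT_mono (by omega) (binomFun_mul_mem α β)
  | zero_left => simp
  | zero_right => simp
  | add_left _ _ _ _ _ _ h1 h2 => rw [add_mul]; exact add_mem h1 h2
  | add_right _ _ _ _ _ _ h1 h2 => rw [mul_add]; exact add_mem h1 h2
  | smul_left c _ _ _ _ h1 => rw [smul_mul_assoc]; exact Submodule.smul_mem _ _ h1
  | smul_right c _ _ _ _ h1 => rw [mul_smul_comm]; exact Submodule.smul_mem _ _ h1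

theorem coord_mem_degLT (s : σ) (c : ℕ) :
    (fun x : σ → ℤ_[p] => ρ (Ring.choose (x s) c)) ∈ degLT ρ σ (c + 1) := by
  classical
  have : (fun x : σ → ℤ_[p] => ρ (Ring.choose (x s) c)) = binomFun ρ (Finsupp.single s c) := by
    funext x
    rw [binomFun, prod_eq_single s]
    · simp
    · intro t _ hts
      simp [Finsupp.single_eq_of_ne hts]
    · simp
  rw [this]
  exact binomFun_mem (by simp [Finsupp.degree_single])

/-- Families whose `e`-th member has degree at most `m e` are stable under convolution. -/
theorem convolution_mem_degLT (m : ℕ) {f g : ℕ → (σ → ℤ_[p]) → k}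
    (hf : ∀ e, f e ∈ degLT ρ σ (m * e + 1)) (hg : ∀ e, g e ∈ degLT ρ σ (m * e + 1)) (e : ℕ) :
    ∑ ij ∈ antidiagonal e, f ij.1 * g ij.2 ∈ degLT ρ σ (m * e + 1) := by
  refine Submodule.sum_mem _ fun ij hij => mul_mem_degLT (hf _) (hg _) ?_
  rw [← HasAntidiagonal.mem_antidiagonal.1 hij, mul_add]
  omega

theorem coeff_binomTail_pow_mem (s : σ) (i e : ℕ) :
    (fun x : σ → ℤ_[p] => ρ (PowerSeries.coeff e (binomTail (x s) ^ i))) ∈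
      degLT ρ σ (1 * e + 1) := by
  induction i generalizing e with
  | zero =>
    by_cases he : e = 0
    · subst he
      simpa using one_mem_degLT (ρ := ρ) (σ := σ)
    · simp only [pow_zero, PowerSeries.coeff_one, he, if_false, map_zero]
      exact zero_mem _
  | succ i ih =>
    have h1 : ∀ e, (fun x : σ → ℤ_[p] => ρ (PowerSeries.coeff e (binomTail (x s)))) ∈
        degLT ρ σ (1 * e + 1) := by
      intro e
      simp only [coeff_binomTail]
      split_ifs
      · simp only [map_zero]; exact zero_mem _
      · rw [one_mul]; exact coord_mem_degLT s e
    convert convolution_mem_degLT 1 ih h1 e using 1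
    funext x
    simp [pow_succ, PowerSeries.coeff_mul]

theorem choose_mul_mem_degLT (s t : σ) (e : ℕ) :
    (fun x : σ → ℤ_[p] => ρ (Ring.choose (x s * x t) e)) ∈ degLT ρ σ (2 * e + 1) := by
  have : (fun x : σ → ℤ_[p] => ρ (Ring.choose (x s * x t) e)) =
      ∑ i ∈ range (e + 1), (fun x : σ → ℤ_[p] => ρ (Ring.choose (x s) i)) *
        fun x => ρ (PowerSeries.coeff e (binomTail (x t) ^ i)) := by
    funext x
    simp [choose_mul_eq_sum]
  rw [this]
  refine Submodule.sum_mem _ fun i hi =>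
    mul_mem_degLT (coord_mem_degLT s i) (coeff_binomTail_pow_mem t i e) ?_
  have := mem_range.1 hi
  omega

theorem choose_sum_mul_mem_degLT {κ : Type*} (S : Finset κ) (l r : κ → σ) (e : ℕ) :
    (fun x : σ → ℤ_[p] => ρ (Ring.choose (∑ i ∈ S, x (l i) * x (r i)) e)) ∈
      degLT ρ σ (2 * e + 1) := by
  classical
  induction S using Finset.induction_on generalizing e with
  | empty =>
    by_cases he : e = 0
    · subst he
      simpa using one_mem_degLT (ρ := ρ) (σ := σ)
    · simp only [sum_empty, Ring.choose_zero_pos _ (Nat.pos_of_ne_zero he), map_zero]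
      exact zero_mem _
  | insert a S ha ih =>
    convert convolution_mem_degLT 2 (choose_mul_mem_degLT (l a) (r a)) ih e using 1
    funext x
    simp [sum_insert ha, choose_add_eq_sum]

/-- The degree drop caused by `p^u ≥ 3`: the binomial coefficient of index `c` of `p^u` times a
quadratic form is zero modulo `p`, or has degree at most `2 c / p^u`, which is `< c`. -/
theorem choose_pow_mul_mem_degLT (hρ : ρ p = 0) {u : ℕ} (hu : 3 ≤ p ^ u)
    {κ : Type*} (S : Finset κ) (l r : κ → σ) {c : ℕ} (hc : c ≠ 0) :
    (fun x : σ → ℤ_[p] => ρ (Ring.choose ((p : ℤ_[p]) ^ u * ∑ i ∈ S, x (l i) * x (r i)) c)) ∈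
      degLT ρ σ c := by
  simp only [choose_mul_pow_reduction ρ hρ]
  split_ifs with h
  · obtain ⟨e, rfl⟩ := h
    rw [Nat.mul_div_cancel_left _ (by omega)]
    refine degLT_mono ?_ (choose_sum_mul_mem_degLT S l r e)
    have he : 1 ≤ e := Nat.pos_of_ne_zero (right_ne_zero_of_mul hc)
    nlinarith
  · exact zero_mem _

theorem choose_add_mem_degLT (s t : σ) (m : ℕ) :
    (fun x : σ → ℤ_[p] => ρ (Ring.choose (x s + x t) m)) ∈ degLT ρ σ (m + 1) := by
  have h1 : ∀ v : σ, ∀ e, (fun x : σ → ℤ_[p] => ρ (Ring.choose (x v) e)) ∈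
    degLT ρ σ (1 * e + 1) := fun v e => by rw [one_mul]; exact coord_mem_degLT v e
  convert convolution_mem_degLT 1 (h1 s) (h1 t) m using 1
  · rw [one_mul]
  · funext x
    simp [choose_add_eq_sum]

/-- Modulo lower degree, the quadratic term of the group law does not contribute. -/
theorem choose_groupLaw_mem_degLT (hρ : ρ p = 0) {u : ℕ} (hu : 3 ≤ p ^ u)
    {κ : Type*} (S : Finset κ) (l r : κ → σ) (s t : σ) (n : ℕ) :
    (fun x : σ → ℤ_[p] =>
        ρ (Ring.choose (x s + x t + (p : ℤ_[p]) ^ u * ∑ i ∈ S, x (l i) * x (r i)) n)) -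
      (fun x => ρ (Ring.choose (x s + x t) n)) ∈
      degLT ρ σ n := by
  have hmain := choose_add_mem_degLT (ρ := ρ) s t
  have : ((fun x : σ → ℤ_[p] =>
        ρ (Ring.choose (x s + x t + (p : ℤ_[p]) ^ u * ∑ i ∈ S, x (l i) * x (r i)) n)) -
      (fun x => ρ (Ring.choose (x s + x t) n))) =
      ∑ ab ∈ (antidiagonal n).erase (n, 0), (fun x : σ → ℤ_[p] => ρ (Ring.choose (x s + x t) ab.1)) *
        (fun x => ρ (Ring.choose ((p : ℤ_[p]) ^ u * ∑ i ∈ S, x (l i) * x (r i)) ab.2)) := by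
    have hm : (n, 0) ∈ antidiagonal n := by simp
    funext x
    rw [Pi.sub_apply, sub_eq_iff_eq_add, choose_add_eq_sum, map_sum,
      ← Finset.sum_erase_add _ _ hm]
    simp
  rw [this]
  refine Submodule.sum_mem _ fun ab hab => ?_
  rw [mem_erase, HasAntidiagonal.mem_antidiagonal] at hab
  have h2 : ab.2 ≠ 0 := fun h => hab.1 (Prod.ext (by have := hab.2; dsimp; omega) h)
  refine mul_mem_degLT (hmain _) (choose_pow_mul_mem_degLT hρ hu S l r h2) ?_
  have := hab.2
  omega

/-- Products of functions with the same leading terms have the same leading term. The second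
conjunct serves the induction. -/
theorem prod_sub_prod_mem_degLT {ι : Type*} (S : Finset ι) (a : ι → ℕ)
    (f g : ι → (σ → ℤ_[p]) → k) (hg : ∀ i, g i ∈ degLT ρ σ (a i + 1))
    (hfg : ∀ i, f i - g i ∈ degLT ρ σ (a i)) :
    ∏ i ∈ S, f i - ∏ i ∈ S, g i ∈ degLT ρ σ (∑ i ∈ S, a i) ∧
      ∏ i ∈ S, g i ∈ degLT ρ σ (∑ i ∈ S, a i + 1) := by
  classical
  induction S using Finset.induction_on with
  | empty => exact ⟨by simp, by simpa using! one_mem_degLT⟩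
  | insert i S hi ih =>
    rw [prod_insert hi, prod_insert hi, sum_insert hi]
    have hf : f i ∈ degLT ρ σ (a i + 1) := by
      have := add_mem (degLT_mono (Nat.le_succ _) (hfg i)) (hg i)
      simpa using this
    refine ⟨?_, mul_mem_degLT (hg i) ih.2 (by omega)⟩
    have : f i * ∏ i ∈ S, f i - g i * ∏ i ∈ S, g i =
        f i * (∏ i ∈ S, f i - ∏ i ∈ S, g i) + (f i - g i) * ∏ i ∈ S, g i := by ring
    rw [this]
    exact add_mem (mul_mem_degLT hf ih.1 (by omega)) (mul_mem_degLT (hfg i) ih.2 (by omega))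

end Filtration

/-! ### Moments of elements of the group algebra -/

section Moments
variable {p : ℕ} [Fact p.Prime] {k : Type*} [Field k] {ρ : ℤ_[p] →+* k}
variable {σ : Type*} {Γ : Type*}

/-- Integration of functions of the coordinates `A` against `a`, viewed as a finitely supported
measure: `f ↦ ∑ a_g f (A g)`. -/
noncomputable def moment (A : Γ → σ → ℤ_[p]) (a : MonoidAlgebra k Γ) :
    ((σ → ℤ_[p]) → k) →ₗ[k] k :=
  ∑ g ∈ a.coeff.support, a.coeff g • LinearMap.proj (A g)

/-- Integration against the product measure of `a` and `b`; a function of the pair `(A g, A h)` is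
encoded as a function on `ℤ_p^(σ ⊕ σ)`. -/
noncomputable def moment₂ (A : Γ → σ → ℤ_[p]) (a b : MonoidAlgebra k Γ) :
    ((σ ⊕ σ → ℤ_[p]) → k) →ₗ[k] k :=
  ∑ g ∈ a.coeff.support, ∑ h ∈ b.coeff.support,
    (a.coeff g * b.coeff h) • LinearMap.proj (Sum.elim (A g) (A h))

theorem moment_apply (A : Γ → σ → ℤ_[p]) (a : MonoidAlgebra k Γ) (f : (σ → ℤ_[p]) → k) :
    moment A a f = ∑ g ∈ a.coeff.support, a.coeff g * f (A g) := by
  simp [moment]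

theorem moment₂_apply (A : Γ → σ → ℤ_[p]) (a b : MonoidAlgebra k Γ) (f : (σ ⊕ σ → ℤ_[p]) → k) :
    moment₂ A a b f = ∑ g ∈ a.coeff.support, ∑ h ∈ b.coeff.support,
      (a.coeff g * b.coeff h) * f (Sum.elim (A g) (A h)) := by
  simp [moment₂]

theorem moment₂_prod (A : Γ → σ → ℤ_[p]) (a b : MonoidAlgebra k Γ) (f g : (σ → ℤ_[p]) → k) :
    moment₂ A a b (fun w => f (w ∘ Sum.inl) * g (w ∘ Sum.inr)) = moment A a f * moment A b g := by
  rw [moment₂_apply, moment_apply, moment_apply, sum_mul_sum]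
  refine sum_congr rfl fun _ _ => sum_congr rfl fun _ _ => ?_
  rw [Sum.elim_comp_inl, Sum.elim_comp_inr]
  ring

theorem moment_mul [Monoid Γ] (A : Γ → σ → ℤ_[p]) (a b : MonoidAlgebra k Γ) (f : (σ → ℤ_[p]) → k)
    (F : (σ ⊕ σ → ℤ_[p]) → k) (hF : ∀ g h, F (Sum.elim (A g) (A h)) = f (A (g * h))) :
    moment A (a * b) f = moment₂ A a b F := by
  have h1 : ∀ c : MonoidAlgebra k Γ,
      moment A c f = Finsupp.linearCombination k (fun g => f (A g)) c.coeff := by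
    intro c
    simp [moment_apply, Finsupp.linearCombination_apply, Finsupp.sum]
  rw [h1, moment₂_apply, MonoidAlgebra.mul_def]
  simp only [hF]
  simp [Finsupp.sum, -Finsupp.single_mul]

variable [Fintype σ]

/-- If the moments of `a` vanish in degree `< r` and those of `b` in degree `< s`, then the
product measure kills every function of degree `< r + s`. -/
theorem moment₂_eq_zero {A : Γ → σ → ℤ_[p]} {a b : MonoidAlgebra k Γ} {r s : ℕ}
    (ha : ∀ α : σ →₀ ℕ, α.degree < r → moment A a (binomFun ρ α) = 0)
    (hb : ∀ α : σ →₀ ℕ, α.degree < s → moment A b (binomFun ρ α) = 0)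
    {F : (σ ⊕ σ → ℤ_[p]) → k} (hF : F ∈ degLT ρ (σ ⊕ σ) (r + s)) : moment₂ A a b F = 0 := by
  induction hF using Submodule.span_induction with
  | mem F hF =>
    obtain ⟨ω, hω, rfl⟩ := hF
    let β : σ →₀ ℕ := Finsupp.equivFunOnFinite.symm fun s => ω (Sum.inl s)
    let γ : σ →₀ ℕ := Finsupp.equivFunOnFinite.symm fun s => ω (Sum.inr s)
    have h1 : binomFun ρ ω =
        fun w => binomFun ρ β (w ∘ Sum.inl) * binomFun ρ γ (w ∘ Sum.inr) := by
      funext w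
      simp [binomFun, Fintype.prod_sum_type, β, γ]
    have h2 : ω.degree = β.degree + γ.degree := by
      simp [Finsupp.degree_eq_sum, Fintype.sum_sum_type, β, γ]
    rw [h1, moment₂_prod]
    by_cases h : β.degree < r
    · rw [ha _ h, zero_mul]
    · rw [hb γ (by omega), mul_zero]
  | zero => exact map_zero _
  | add _ _ _ _ h1 h2 => rw [map_add, h1, h2, add_zero]
  | smul c _ _ h => rw [map_smul, h, smul_zero]

/-- An element of the group algebra all of whose moments vanish is zero, since the functions of
bounded degree form an algebra separating points. -/
theorem exists_moment_ne_zero (hρ : ρ p = 0) {A : Γ → σ → ℤ_[p]} (hA : Function.Injective A)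
    {a : MonoidAlgebra k Γ} (ha : a ≠ 0) : ∃ α : σ →₀ ℕ, moment A a (binomFun ρ α) ≠ 0 := by
  classical
  by_contra! H
  have H' : ∀ f : (σ → ℤ_[p]) → k, (∃ n, f ∈ degLT ρ σ n) → moment A a f = 0 := by
    rintro f ⟨n, hf⟩
    induction hf using Submodule.span_induction with
    | mem f hf => obtain ⟨α, _, rfl⟩ := hf; exact H α
    | zero => exact map_zero _
    | add _ _ _ _ h1 h2 => rw [map_add, h1, h2, add_zero]
    | smul c _ _ h => rw [map_smul, h, smul_zero]
  obtain ⟨g₀, hg₀⟩ : a.coeff.support.Nonempty := by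
    rw [Finsupp.support_nonempty_iff]
    exact fun h => ha (MonoidAlgebra.coeff_eq_zero.1 h)
  -- For each `g ≠ g₀`, a function of bounded degree vanishing at `g` and not at `g₀`.
  have hsep : ∀ g : Γ, ∃ f : (σ → ℤ_[p]) → k, (∃ n, f ∈ degLT ρ σ n) ∧
      (g ≠ g₀ → f (A g) = 0 ∧ f (A g₀) ≠ 0) := by
    intro g
    by_cases hg : g = g₀
    · exact ⟨0, ⟨0, zero_mem _⟩, fun h => (h hg).elim⟩
    obtain ⟨s, hs⟩ := Function.ne_iff.1 (hA.ne hg)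
    obtain ⟨c, hc⟩ := exists_choose_ne ρ hρ hs
    refine ⟨fun x => ρ (Ring.choose (x s) c) - ρ (Ring.choose (A g s) c), ⟨c + 1, ?_⟩, fun _ =>
      ⟨sub_self _, sub_ne_zero.2 hc.symm⟩⟩
    have h1 := Submodule.smul_mem _ (ρ (Ring.choose (A g s) c))
      (degLT_mono (Nat.le_add_left 1 c) (one_mem_degLT (ρ := ρ) (σ := σ)))
    convert sub_mem (coord_mem_degLT s c) h1 using 1
    funext x
    simp
  choose f hf hfg using hsep
  have hprod : ∃ n, ∏ g ∈ a.coeff.support.erase g₀, f g ∈ degLT ρ σ n := by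
    refine prod_induction _ (fun F => ∃ n, F ∈ degLT ρ σ n) ?_ ⟨1, one_mem_degLT⟩ fun g _ => hf g
    rintro F G ⟨m, hm⟩ ⟨n, hn⟩
    exact ⟨m + n, mul_mem_degLT hm hn (Nat.le_succ _)⟩
  have h := H' _ hprod
  rw [moment_apply, sum_eq_single g₀] at h
  · rcases mul_eq_zero.1 h with h | h
    · exact (Finsupp.mem_support_iff.1 hg₀) h
    · rw [prod_apply, prod_eq_zero_iff] at h
      obtain ⟨g, hg, hg'⟩ := h
      exact (hfg g (ne_of_mem_erase hg)).2 hg'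
  · intro g hg hne
    rw [prod_apply, prod_eq_zero (mem_erase.2 ⟨hne, hg⟩) (hfg g hne).1, mul_zero]
  · exact fun h => (h hg₀).elim

theorem prod_choose_add [DecidableEq σ] (α : σ →₀ ℕ) (x y : σ → ℤ_[p]) :
    ∏ s, ρ (Ring.choose (x s + y s) (α s)) =
      ∑ βγ ∈ antidiagonal α, binomFun ρ βγ.1 x * binomFun ρ βγ.2 y := by
  simp only [choose_add_eq_sum, map_sum, map_mul, binomFun, ← prod_mul_distrib]
  rw [prod_univ_sum]
  refine sum_nbij' (fun j => (Finsupp.equivFunOnFinite.symm fun s => (j s).1,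
    Finsupp.equivFunOnFinite.symm fun s => (j s).2)) (fun βγ s => (βγ.1 s, βγ.2 s)) ?_ ?_ ?_ ?_ ?_
  · intro j hj
    rw [HasAntidiagonal.mem_antidiagonal]
    ext s
    simpa using Fintype.mem_piFinset.1 hj s
  · intro βγ h
    rw [HasAntidiagonal.mem_antidiagonal] at h
    simp [Fintype.mem_piFinset, ← h]
  · intro j _; rfl
  · intro βγ _
    ext <;> rfl
  · intro j _; rfl

/-- Absence of zero divisors in residue characteristic `p`, for a monoid with injective
`p`-adic coordinates in which multiplication is addition plus `p^u` times a sum of products of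
coordinates. -/
theorem mul_ne_zero_of_coordinates [Monoid Γ] (hρ : ρ p = 0) {u : ℕ} (hu : 3 ≤ p ^ u)
    {κ : Type*} [Fintype κ] {A : Γ → σ → ℤ_[p]} (hA : Function.Injective A) (l r : σ → κ → σ)
    (hmul : ∀ g h s, A (g * h) s =
      A g s + A h s + (p : ℤ_[p]) ^ u * ∑ i, A g (l s i) * A h (r s i))
    {a b : MonoidAlgebra k Γ} (ha : a ≠ 0) (hb : b ≠ 0) : a * b ≠ 0 := by
  classical
  have hmin : ∀ c : MonoidAlgebra k Γ, c ≠ 0 → ∃ n,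
      (∀ α : σ →₀ ℕ, α.degree < n → moment A c (binomFun ρ α) = 0) ∧
      ∃ α : σ →₀ ℕ, α.degree = n ∧ moment A c (binomFun ρ α) ≠ 0 := by
    intro c hc
    have hex : ∃ n, ∃ α : σ →₀ ℕ, α.degree = n ∧ moment A c (binomFun ρ α) ≠ 0 := by
      obtain ⟨α, hα⟩ := exists_moment_ne_zero hρ hA hc
      exact ⟨_, α, rfl, hα⟩
    refine ⟨Nat.find hex, fun α hα => ?_, Nat.find_spec hex⟩
    by_contra h
    exact Nat.find_min hex hα ⟨α, rfl, h⟩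
  obtain ⟨m, ham, β₀, hβ₀, ha₀⟩ := hmin a ha
  obtain ⟨n, hbn, γ₀, hγ₀, hb₀⟩ := hmin b hb
  -- The lowest-degree forms of `a` and `b`; as power series they multiply in a domain.
  let P : MvPowerSeries σ k := fun β => if β.degree = m then moment A a (binomFun ρ β) else 0
  let Q : MvPowerSeries σ k := fun γ => if γ.degree = n then moment A b (binomFun ρ γ) else 0
  have hPc : ∀ β, MvPowerSeries.coeff β P =
    if β.degree = m then moment A a (binomFun ρ β) else 0 := fun _ => rfl
  have hQc : ∀ γ, MvPowerSeries.coeff γ Q =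
    if γ.degree = n then moment A b (binomFun ρ γ) else 0 := fun _ => rfl
  have hP : P ≠ 0 := fun h => ha₀ (by have := hPc β₀; rwa [h, if_pos hβ₀, map_zero, eq_comm] at this)
  have hQ : Q ≠ 0 := fun h => hb₀ (by have := hQc γ₀; rwa [h, if_pos hγ₀, map_zero, eq_comm] at this)
  obtain ⟨α, hα⟩ : ∃ α, MvPowerSeries.coeff α (P * Q) ≠ 0 := by
    by_contra! h
    exact mul_ne_zero hP hQ (MvPowerSeries.ext h)
  rw [MvPowerSeries.coeff_mul] at hα
  have hdeg : α.degree = m + n := by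
    obtain ⟨βγ, h1, h2⟩ := exists_ne_zero_of_sum_ne_zero hα
    rw [hPc, hQc] at h2
    rw [HasAntidiagonal.mem_antidiagonal] at h1
    have h3 := left_ne_zero_of_mul h2
    have h4 := right_ne_zero_of_mul h2
    rw [← h1, map_add]
    rw [ne_eq, ite_eq_right_iff, Classical.not_imp] at h3 h4
    rw [h3.1, h4.1]
  intro hab
  apply hα
  -- `∏ F s` is `binomFun ρ α` evaluated at a product, and `∏ G s` is its leading term.
  let F : σ → (σ ⊕ σ → ℤ_[p]) → k := fun s w =>
    ρ (Ring.choose (w (Sum.inl s) + w (Sum.inr s) +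
      (p : ℤ_[p]) ^ u * ∑ i, w (Sum.inl (l s i)) * w (Sum.inr (r s i))) (α s))
  let G : σ → (σ ⊕ σ → ℤ_[p]) → k := fun s w =>
    ρ (Ring.choose (w (Sum.inl s) + w (Sum.inr s)) (α s))
  have hFG : ∏ s, F s - ∏ s, G s ∈ degLT ρ (σ ⊕ σ) (m + n) := by
    rw [← hdeg, Finsupp.degree_eq_sum]
    exact (prod_sub_prod_mem_degLT univ α F G
      (fun s => choose_add_mem_degLT (Sum.inl s) (Sum.inr s) (α s))
      (fun s => choose_groupLaw_mem_degLT hρ hu univ (fun i => Sum.inl (l s i))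
        (fun i => Sum.inr (r s i)) (Sum.inl s) (Sum.inr s) (α s))).1
  have h1 : moment₂ A a b (∏ s, F s) = 0 := by
    rw [← moment_mul A a b (binomFun ρ α), hab, moment_apply]
    · simp
    · intro g h
      simp [F, binomFun, hmul]
  have h2 := moment₂_eq_zero ham hbn hFG
  rw [map_sub, h1, zero_sub, neg_eq_zero] at h2
  have hG : ∏ s, G s = ∑ βγ ∈ antidiagonal α, fun w =>
      binomFun ρ βγ.1 (w ∘ Sum.inl) * binomFun ρ βγ.2 (w ∘ Sum.inr) := by
    funext w
    rw [prod_apply, Finset.sum_apply]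
    exact prod_choose_add α (w ∘ Sum.inl) (w ∘ Sum.inr)
  rw [hG, map_sum] at h2
  rw [← h2]
  refine sum_congr rfl fun βγ hβγ => ?_
  rw [HasAntidiagonal.mem_antidiagonal] at hβγ
  have hd : βγ.1.degree + βγ.2.degree = m + n := by rw [← map_add, hβγ, hdeg]
  rw [moment₂_prod, hPc, hQc]
  by_cases hm : βγ.1.degree = m
  · rw [if_pos hm, if_pos (by omega)]
  · rw [if_neg hm, zero_mul]
    rcases lt_or_gt_of_ne hm with h | h
    · rw [ham _ h, zero_mul]
    · rw [hbn βγ.2 (by omega), mul_zero]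

end Moments

/-! ### Reduction from characteristic zero to characteristic `p` -/

section Valuation

/-- The `p`-adic valuation extends from `ℚ` to every field of characteristic zero. -/
theorem exists_valuationSubring_residue (p : ℕ) [Fact p.Prime] (K : Type*) [Field K] [CharZero K] :
    ∃ V : ValuationSubring K, (p : IsLocalRing.ResidueField V) = 0 := by
  let R : Subring K := (Int.castRingHom K).range
  let I : Ideal R := Ideal.span {(p : R)}
  have hI : I ≠ ⊤ := by
    rw [Ne, Ideal.eq_top_iff_one, Ideal.mem_span_singleton]
    rintro ⟨⟨_, n, rfl⟩, hn⟩
    have h1 := congrArg (Subtype.val) hn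
    have h2 : ((1 : ℤ) : K) = ((p * n : ℤ) : K) := by
      simpa using! h1
    have h3 : (p : ℤ) ∣ 1 := ⟨n, Int.cast_injective h2⟩
    exact (Fact.out : p.Prime).one_lt.ne' (by exact_mod_cast Int.eq_one_of_dvd_one (by positivity) h3)
  obtain ⟨V, -, hV⟩ := I.image_subset_nonunits_valuationSubring hI
  refine ⟨V, ?_⟩
  have hp : (p : K) ∈ (V.nonunits : Set K) := hV ⟨p, Ideal.mem_span_singleton_self _, by simp⟩
  rw [← V.image_maximalIdeal] at hp
  obtain ⟨x, hx, hxp⟩ := hp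
  have : x = (p : V) := Subtype.ext (by simpa using hxp)
  rw [← map_natCast (IsLocalRing.residue V), ← this, IsLocalRing.residue_eq_zero_iff]
  exact hx

/-- After division by a coefficient of largest valuation, a nonzero element of `K[Γ]` has
coefficients in `V` and nonzero reduction to the residue field. -/
theorem exists_primitive_multiple {K : Type*} [Field K] (V : ValuationSubring K) {Γ : Type*}
    [Monoid Γ] {a : MonoidAlgebra K Γ} (ha : a ≠ 0) :
    ∃ (c : K) (a' : MonoidAlgebra V Γ), MonoidAlgebra.mapRingHom Γ V.subtype a' = c • a ∧
      MonoidAlgebra.mapRingHom Γ (IsLocalRing.residue V) a' ≠ 0 := by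
  obtain ⟨g₀, hg₀, hmax⟩ := exists_max_image a.coeff.support (fun g => V.valuation (a.coeff g))
    (by
      rw [Finsupp.support_nonempty_iff]
      exact fun h => ha (MonoidAlgebra.coeff_eq_zero.1 h))
  have h0 : a.coeff g₀ ≠ 0 := Finsupp.mem_support_iff.1 hg₀
  have hmem : ∀ g, (a.coeff g₀)⁻¹ * a.coeff g ∈ V := by
    intro g
    by_cases hg : g ∈ a.coeff.support
    · rw [← V.valuation_le_one_iff, map_mul, map_inv₀]
      rw [inv_mul_le_one₀ (by simpa [zero_lt_iff] using h0)]
      exact hmax g hg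
    · rw [Finsupp.notMem_support_iff.1 hg, mul_zero]
      exact zero_mem _
  let a' : MonoidAlgebra V Γ := .ofCoeff (Finsupp.onFinset a.coeff.support
    (fun g => (⟨(a.coeff g₀)⁻¹ * a.coeff g, hmem g⟩ : V)) (by
      intro g hg
      rw [Finsupp.mem_support_iff]
      intro h
      exact hg (Subtype.ext (by simp [h]))))
  refine ⟨(a.coeff g₀)⁻¹, a', ?_, ?_⟩
  · ext g
    simp [a']
  · intro h
    have h1 := congrArg (fun x => MonoidAlgebra.coeff x g₀) h
    have h2 : a'.coeff g₀ = 1 := Subtype.ext (by simp [a', h0])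
    simp [h2] at h1

end Valuation

/-! ### Congruence subgroups -/

/-- Elements of `CS(u,d,p)` have the form `1 + p^u A`; the entries of `A` are the coordinates. -/
theorem exists_CS_coordinates (p : ℕ) [Fact p.Prime] (u d : ℕ) :
    ∃ A : CS p u d → Fin d × Fin d → ℤ_[p], ∀ (g : CS p u d) (s : Fin d × Fin d),
      (g : (Matrix (Fin d) (Fin d) ℤ_[p])ˣ).1 s.1 s.2 =
        (1 : Matrix (Fin d) (Fin d) ℤ_[p]) s.1 s.2 + (p : ℤ_[p]) ^ u * A g s := by
  have : ∀ (g : CS p u d) (s : Fin d × Fin d), ∃ y : ℤ_[p],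
      (g : (Matrix (Fin d) (Fin d) ℤ_[p])ˣ).1 s.1 s.2 =
        (1 : Matrix (Fin d) (Fin d) ℤ_[p]) s.1 s.2 + (p : ℤ_[p]) ^ u * y := by
    rintro ⟨g, hg⟩ s
    have h1 : csRed p u d g = 1 := hg
    have h2 := Matrix.ext_iff.2 (congrArg Units.val h1) s.1 s.2
    have h3 : Ideal.Quotient.mk (Ideal.span {(p : ℤ_[p]) ^ u}) (g.1 s.1 s.2) =
        Ideal.Quotient.mk _ ((1 : Matrix (Fin d) (Fin d) ℤ_[p]) s.1 s.2) := by
      refine Eq.trans h2 ?_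
      simp only [Units.val_one, Matrix.one_apply]
      split_ifs <;> simp
    rw [Ideal.Quotient.eq, Ideal.mem_span_singleton] at h3
    obtain ⟨y, hy⟩ := h3
    exact ⟨y, by rw [← hy]; ring⟩
  choose A hA using this
  exact ⟨A, hA⟩

/-- If `Γ = CS(u,d,p)` (with `u ≥ 2` when `p = 2`) 
and `K` is a field of characteristic `0`, then the group algebra `K[Γ]` is a domain. -/
theorem charZero_groupAlgebra_congruenceSubgroup_isDomain
    (p : ℕ) [Fact p.Prime] (u d : ℕ) (hu : 0 < u) (hd : 0 < d) (h2 : p = 2 → 2 ≤ u)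
    (K : Type*) [Field K] [CharZero K] :
    IsDomain (MonoidAlgebra K ↥(CS p u d)) := by
  have hp := (Fact.out : p.Prime)
  have hpu : 3 ≤ p ^ u := by
    rcases hp.two_le.eq_or_lt with h | h
    · have h4 : p ^ 2 ≤ p ^ u := Nat.pow_le_pow_right hp.pos (h2 h.symm)
      rw [← h] at h4 ⊢
      omega
    · exact le_trans h (Nat.le_self_pow hu.ne' p)
  obtain ⟨A, hA⟩ := exists_CS_coordinates p u d
  have hpow : (p : ℤ_[p]) ^ u ≠ 0 := pow_ne_zero _ (Nat.cast_ne_zero.2 hp.ne_zero)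
  have hinj : Function.Injective A := by
    intro g h hgh
    ext i j
    rw [hA g (i, j), hA h (i, j), hgh]
  have hmul : ∀ g h s, A (g * h) s = A g s + A h s +
      (p : ℤ_[p]) ^ u * ∑ i, A g (s.1, i) * A h (i, s.2) := by
    intro g h s
    have hmat : ∀ g : CS p u d, (g : (Matrix (Fin d) (Fin d) ℤ_[p])ˣ).1 =
        1 + (p : ℤ_[p]) ^ u • Matrix.of fun i j => A g (i, j) := by
      intro g
      ext i j
      simpa using hA g (i, j)
    have h1 : ((g * h : CS p u d) : (Matrix (Fin d) (Fin d) ℤ_[p])ˣ).1 =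
      (g : (Matrix (Fin d) (Fin d) ℤ_[p])ˣ).1 * (h : (Matrix (Fin d) (Fin d) ℤ_[p])ˣ).1 := rfl
    rw [hmat, hmat, hmat, add_mul, one_mul, mul_add, mul_one, add_assoc, add_right_inj,
      Matrix.smul_mul, Matrix.mul_smul, ← smul_add, ← smul_add] at h1
    have h3 := congrFun (congrFun (smul_right_injective _ hpow h1) s.1) s.2
    simp only [Matrix.add_apply, Matrix.smul_apply, Matrix.mul_apply, Matrix.of_apply,
      smul_eq_mul] at h3
    rw [h3]
    ring
  obtain ⟨V, hV⟩ := exists_valuationSubring_residue p K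
  have hchar : CharP (IsLocalRing.ResidueField V) p :=
    CharP.ringChar_of_prime_eq_zero hp hV ▸ ringChar.charP _
  let ρ : ℤ_[p] →+* IsLocalRing.ResidueField V :=
    (ZMod.castHom dvd_rfl (IsLocalRing.ResidueField V)).comp PadicInt.toZMod
  have hρ : ρ p = 0 := by rw [map_natCast, hV]
  have : NoZeroDivisors (MonoidAlgebra K (CS p u d)) := by
    refine ⟨fun {a b} hab => ?_⟩
    by_contra! h
    obtain ⟨c, a', ha', ha⟩ := exists_primitive_multiple V h.1
    obtain ⟨e, b', hb', hb⟩ := exists_primitive_multiple V h.2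
    have h0 : a' * b' = 0 := by
      have hi : Function.Injective (MonoidAlgebra.mapRingHom (CS p u d) V.subtype) := by
        intro x y hxy
        ext g
        have := congrArg (fun z => MonoidAlgebra.coeff z g) hxy
        simpa using this
      apply hi
      rw [map_mul, ha', hb', map_zero, smul_mul_smul_comm, hab, smul_zero]
    refine mul_ne_zero_of_coordinates hρ hpu hinj (fun s i => (s.1, i)) (fun s i => (i, s.2))
      hmul ha hb ?_
    rw [← map_mul, h0, map_zero]
  exact NoZeroDivisors.to_isDomain _
end

section
/- Let p be a fixed prime and let G be a group with the property that the group algebra k[G] is a domain for every field k of characteristic p. Then the group algebra K[G] is a domain for every field K of characteristic 0. -/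
/-!
Let `x * y = 0` in `K[G]` with `K` of characteristic zero. The coefficients of `x` and `y` generate
a countable subfield, so `K` may be assumed countable. By Chevalley's extension theorem `K` has a
valuation subring `V` whose maximal ideal contains `p`. A nonzero element of `K[G]`, divided by a
coefficient of maximal valuation, has all coefficients in `V` and one of them equal to `1`, so it
lies in `V[G]` and has nonzero image over the residue field `k` of `V`
(`exists_smul_eq_map_residue_ne_zero`). Since `V[G] → k[G]` is a ring homomorphism, two nonzero
elements of `K[G]` with zero product would give zero divisors in `k[G]`, where `k` has
characteristic `p`.

The reduction to countable `K` makes `k` countable as well, hence isomorphic to a field in any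
prescribed universe; this is what allows the universes of the two families of fields to differ.
-/

universe v w

open IsLocalRing

/-- Chevalley's extension theorem for the ideal `(p)` of `ℤ`. -/
lemma exists_valuationSubring_residue_charP (p : ℕ) (hp : p.Prime) (K : Type*) [Field K]
    [CharZero K] : ∃ V : ValuationSubring K, CharP (ResidueField V) p := by
  have hI : Ideal.span {(p : (Int.castRingHom K).range)} ≠ ⊤ := by
    rw [Ne, Ideal.span_singleton_eq_top]
    intro hu
    obtain ⟨⟨_, n, rfl⟩, hb⟩ := isUnit_iff_exists_inv.mp hu
    have h1 : ((p : ℤ) : K) * (n : K) = 1 := by simpa using congrArg Subtype.val hb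
    have h2 : (p : ℤ) * n = 1 := by exact_mod_cast h1
    exact (Nat.prime_iff_prime_int.mp hp).not_isUnit (IsUnit.of_mul_eq_one _ h2)
  obtain ⟨V, -, hV⟩ := Ideal.image_subset_nonunits_valuationSubring _ hI
  have hpV : (p : K) ∈ V.nonunits :=
    hV ⟨_, Ideal.subset_span rfl, by simp⟩
  have hmem : (p : V) ∈ maximalIdeal V := by
    rw [ValuationSubring.valuation_lt_one_iff]
    simpa [ValuationSubring.mem_nonunits_iff] using hpV
  have h0 : ((p : ℕ) : ResidueField V) = 0 := by
    rw [← map_natCast (residue V)]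
    exact (residue_eq_zero_iff _).mpr hmem
  refine ⟨V, ?_⟩
  have hdvd := ringChar.dvd h0
  rcases (Nat.dvd_prime hp).mp hdvd with h1 | h1
  · exact absurd h1 CharP.ringChar_ne_one
  · exact ringChar.of_eq h1

lemma exists_map_eq_of_forall_mem_range {R S G : Type*} [Semiring R] [Semiring S] (f : R →+* S)
    (x : MonoidAlgebra S G) (hx : ∀ g, x.coeff g ∈ Set.range f) :
    ∃ x' : MonoidAlgebra R G, MonoidAlgebra.map (f : R →+ S) x' = x := by
  have : x ∈ Set.range (MonoidAlgebra.map (M := G) (f : R →+ S)) := by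
    rw [MonoidAlgebra.range_map]
    exact hx
  exact this

/-- A nonzero element of `K[G]` can be rescaled to lie in `V[G]` and have nonzero reduction: divide
by a coefficient of maximal valuation. -/
lemma exists_smul_eq_map_residue_ne_zero {K G : Type*} [Field K] (V : ValuationSubring K)
    (x : MonoidAlgebra K G) (hx : x ≠ 0) :
    ∃ (c : K) (x' : MonoidAlgebra V G), MonoidAlgebra.map (V.subtype : V →+ K) x' = c • x ∧
      MonoidAlgebra.map (residue V : V →+ ResidueField V) x' ≠ 0 := by
  have hne : x.coeff.support.Nonempty := by
    rw [Finsupp.support_nonempty_iff]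
    simpa using hx
  obtain ⟨g, hg, hmax⟩ := x.coeff.support.exists_max_image (fun g => V.valuation (x.coeff g)) hne
  have hg0 : x.coeff g ≠ 0 := Finsupp.mem_support_iff.mp hg
  obtain ⟨x', hx'⟩ := exists_map_eq_of_forall_mem_range V.subtype ((x.coeff g)⁻¹ • x) (by
    intro a
    have ha : (x.coeff g)⁻¹ * x.coeff a ∈ V := by
      rw [← ValuationSubring.valuation_le_one_iff, map_mul, map_inv₀]
      by_cases h0 : x.coeff a = 0
      · simp [h0]
      · have hpos : 0 < V.valuation (x.coeff g) := by
          rwa [Valuation.pos_iff]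
        rw [inv_mul_le_iff₀ hpos, mul_one]
        exact hmax a (Finsupp.mem_support_iff.mpr h0)
    exact ⟨⟨_, ha⟩, by simp⟩)
  refine ⟨_, x', hx', fun h0 => ?_⟩
  have h1 : x'.coeff g = 1 := by
    apply Subtype.val_injective
    have := congrArg (fun z => z.coeff g) hx'
    simpa [hg0] using this
  have h2 := congrArg (fun z => z.coeff g) h0
  simp [h1] at h2

lemma mul_ne_zero_of_residue {K G : Type*} [Field K] [Group G] (V : ValuationSubring K)
    [NoZeroDivisors (MonoidAlgebra (ResidueField V) G)] (x y : MonoidAlgebra K G)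
    (hx : x ≠ 0) (hy : y ≠ 0) : x * y ≠ 0 := by
  intro hxy
  obtain ⟨c, x', hx', hx0⟩ := exists_smul_eq_map_residue_ne_zero V x hx
  obtain ⟨d, y', hy', hy0⟩ := exists_smul_eq_map_residue_ne_zero V y hy
  have h0 : x' * y' = 0 := by
    apply MonoidAlgebra.map_injective (V.subtype : V →+ K) Subtype.val_injective
    rw [MonoidAlgebra.map_mul, hx', hy', smul_mul_smul_comm, hxy, smul_zero,
      MonoidAlgebra.map_zero]
  have h1 := MonoidAlgebra.map_mul (residue V) x' y'
  rw [h0, MonoidAlgebra.map_zero] at h1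
  exact mul_ne_zero hx0 hy0 h1.symm

/-- The theorem for countable `K`, where the residue field can be moved to universe `v`. -/
lemma noZeroDivisors_of_countable (p : ℕ) (hp : p.Prime) (G : Type*) [Group G]
    (h : ∀ (k : Type v) [Field k], CharP k p → IsDomain (MonoidAlgebra k G))
    (K : Type w) [Field K] [CharZero K] [Countable K] :
    NoZeroDivisors (MonoidAlgebra K G) := by
  obtain ⟨V, hV⟩ := exists_valuationSubring_residue_charP p hp K
  have : Countable V := Subtype.val_injective.countable
  have : Countable (ResidueField V) := residue_surjective.countable
  let e : Shrink.{v} (ResidueField V) ≃+* ResidueField V := Shrink.ringEquiv _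
  have hk : CharP (Shrink.{v} (ResidueField V)) p :=
    (RingHom.charP_iff e.toRingHom e.injective p).mpr hV
  have := h _ hk
  have : NoZeroDivisors (MonoidAlgebra (ResidueField V) G) :=
    (MonoidAlgebra.mapRingEquiv G e).symm.injective.noZeroDivisors _ (map_zero _) (map_mul _)
  refine ⟨fun {x y} hxy => ?_⟩
  by_contra! hne
  exact mul_ne_zero_of_residue V x y hne.1 hne.2 hxy

/-- If `p` is a fixed prime and `G` is a group such that `k[G]` is a domain for every field `k`
of characteristic `p`, then `K[G]` is a domain for every field `K` of characteristic `0`. -/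
theorem groupAlgebra_isDomain_charZero_of_forall_charP
    (p : ℕ) (hp : p.Prime) (G : Type*) [Group G]
    (h : ∀ (k : Type v) [Field k], CharP k p → IsDomain (MonoidAlgebra k G)) :
    ∀ (K : Type w) [Field K], CharZero K → IsDomain (MonoidAlgebra K G) := by
  intro K _ _
  have : NoZeroDivisors (MonoidAlgebra K G) := by
    refine ⟨fun {x y} hxy => ?_⟩
    let s : Set K := Set.range x.coeff ∪ Set.range y.coeff
    have hs : s.Countable :=
      (x.coeff.finite_range.union y.coeff.finite_range).countable
    let F := Subfield.closure s
    have : Countable F := by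
      rw [← Cardinal.mk_le_aleph0_iff]
      exact (Subfield.cardinalMk_closure_le_max s).trans
        (max_le (Cardinal.le_aleph0_iff_set_countable.mpr hs) le_rfl)
    have := noZeroDivisors_of_countable p hp G h F
    obtain ⟨x', hx'⟩ := exists_map_eq_of_forall_mem_range F.subtype x
      fun g => ⟨⟨_, Subfield.subset_closure (Or.inl ⟨g, rfl⟩)⟩, rfl⟩
    obtain ⟨y', hy'⟩ := exists_map_eq_of_forall_mem_range F.subtype y
      fun g => ⟨⟨_, Subfield.subset_closure (Or.inr ⟨g, rfl⟩)⟩, rfl⟩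
    rw [← hx', ← hy', ← MonoidAlgebra.map_mul] at hxy
    have h0 : x' * y' = 0 := by
      apply MonoidAlgebra.map_injective (F.subtype : F →+ K) Subtype.val_injective
      rw [hxy, MonoidAlgebra.map_zero]
    rw [← hx', ← hy']
    refine (mul_eq_zero.mp h0).imp ?_ ?_ <;> rintro h1 <;> rw [h1, MonoidAlgebra.map_zero]
  exact NoZeroDivisors.to_isDomain _
end

section
/- Let p be a prime, d a positive integer, and j a positive integer (with j ≥ 2 if p = 2). Then every element of CS(j+1,d,p) is the p-th power of an element of CS(j,d,p), and the map x ↦ x^p induces a group isomorphism from CS(j,d,p)/CS(j+1,d,p) onto CS(j+1,d,p)/CS(j+2,d,p). -/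
/-- `CS(j+1,d,p)`, viewed as the (automatically normal) subgroup of `CS(j,d,p)` given by the
kernel of the reduction map modulo `p^(j+1)` restricted to `CS(j,d,p)`. -/
noncomputable def csNext (p : ℕ) [Fact p.Prime] (j d : ℕ) : Subgroup ↥(CS p j d) :=
  ((csRed p (j + 1) d).comp (CS p j d).subtype).ker

instance (p : ℕ) [Fact p.Prime] (j d : ℕ) : (csNext p j d).Normal :=
  MonoidHom.normal_ker _

/-- The truncated binomial expansion `(1 + p^j T)^p = 1 + p^(j+1) T + p^(j+2) Q(T)`. For
`2 ≤ k < p` the `k`-th term is divisible by `p^(jk+1)`, and the term `k = p` by `p^(jp)`;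
the latter is where `j ≥ 2` is needed for `p = 2`. -/
lemma exists_pow_expansion (p : ℕ) (hp : p.Prime) (j : ℕ) (hj : 0 < j) (h2 : p = 2 → 2 ≤ j) :
    ∃ Q : Polynomial ℤ, (1 + (p : Polynomial ℤ) ^ j * Polynomial.X) ^ p =
      1 + (p : Polynomial ℤ) ^ (j + 1) * Polynomial.X + (p : Polynomial ℤ) ^ (j + 2) * Q := by
  obtain ⟨m, rfl⟩ : ∃ m, p = m + 1 := ⟨p - 1, by have := hp.pos; omega⟩
  set P : Polynomial ℤ := ((m + 1 : ℕ) : Polynomial ℤ) with hP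
  have hdvd : P ^ (j + 2) ∣ ∑ k ∈ Finset.range m,
      (P ^ j * Polynomial.X) ^ (k + 1 + 1) * 1 ^ (m + 1 - (k + 1 + 1)) *
        (((m + 1).choose (k + 1 + 1) : ℕ) : Polynomial ℤ) := by
    refine Finset.dvd_sum fun k hk => ?_
    rw [Finset.mem_range] at hk
    rw [one_pow, mul_one, mul_pow, ← pow_mul]
    by_cases hkp : k + 1 + 1 = m + 1
    · refine Dvd.dvd.mul_right (Dvd.dvd.mul_right (pow_dvd_pow _ ?_) _) _
      by_cases h : m + 1 = 2
      · have := h2 h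
        rw [hkp, h]; omega
      · have : 3 ≤ k + 1 + 1 := by have := hp.two_le; omega
        nlinarith
    · obtain ⟨c, hc⟩ := hp.dvd_choose_self (k := k + 1 + 1) (by omega) (by omega)
      rw [hc, Nat.cast_mul, ← hP]
      have : P ^ (j + 2) ∣ P ^ (j * (k + 1 + 1) + 1) := pow_dvd_pow _ (by nlinarith)
      refine this.trans ⟨Polynomial.X ^ (k + 1 + 1) * (c : Polynomial ℤ), by ring⟩
  obtain ⟨Q, hQ⟩ := hdvd
  refine ⟨Q, ?_⟩
  rw [add_comm 1, add_pow, Finset.sum_range_succ', Finset.sum_range_succ', hQ]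
  simp only [zero_add, pow_one, one_pow, mul_one, Nat.choose_one_right, pow_zero,
    Nat.choose_zero_right, Nat.cast_one, ← hP]
  ring

lemma natCast_pow_dvd_mul_left {R : Type*} [Ring R] (p n : ℕ) (a : R) {b : R}
    (h : (p : R) ^ n ∣ b) : (p : R) ^ n ∣ a * b := by
  obtain ⟨c, rfl⟩ := h
  exact ⟨a * c, by rw [← mul_assoc, ← mul_assoc, ((Nat.cast_commute p a).pow_left n).eq]⟩

/-- Integer polynomials respect congruences modulo the central element `p^n`, also in a
noncommutative ring. -/
lemma natCast_pow_dvd_aeval_sub {R : Type*} [Ring R] (p n : ℕ) (Q : Polynomial ℤ) {x y : R}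
    (h : (p : R) ^ n ∣ x - y) :
    (p : R) ^ n ∣ Polynomial.aeval x Q - Polynomial.aeval y Q := by
  induction Q using Polynomial.induction_on' with
  | add f g hf hg =>
    rw [map_add, map_add, add_sub_add_comm]
    exact dvd_add hf hg
  | monomial k a =>
    rw [Polynomial.aeval_monomial, Polynomial.aeval_monomial, ← mul_sub]
    refine natCast_pow_dvd_mul_left _ _ _ ?_
    induction k with
    | zero => simp
    | succ k ih =>
      have : x ^ (k + 1) - y ^ (k + 1) = (x ^ k - y ^ k) * x + y ^ k * (x - y) := by
        rw [pow_succ, pow_succ]; noncomm_ring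
      rw [this]
      exact dvd_add (ih.mul_right _) (natCast_pow_dvd_mul_left _ _ _ h)

/-- The expansion of `exists_pow_expansion` evaluated in an arbitrary, possibly noncommutative,
ring. The function `q` is evaluation of an integer polynomial; only its compatibility with
congruences modulo powers of `p` is recorded. -/
lemma exists_pow_expansion_ring (R : Type*) [Ring R] (p : ℕ) (hp : p.Prime) (j : ℕ) (hj : 0 < j)
    (h2 : p = 2 → 2 ≤ j) :
    ∃ q : R → R, (∀ n x y, (p : R) ^ n ∣ x - y → (p : R) ^ n ∣ q x - q y) ∧
      ∀ x : R, (1 + (p : R) ^ j * x) ^ p =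
        1 + (p : R) ^ (j + 1) * x + (p : R) ^ (j + 2) * q x := by
  obtain ⟨Q, hQ⟩ := exists_pow_expansion p hp j hj h2
  refine ⟨fun x => Polynomial.aeval x Q, fun n x y => natCast_pow_dvd_aeval_sub p n Q,
    fun x => ?_⟩
  simpa using congrArg (Polynomial.aeval x) hQ

section Padic

variable {p : ℕ} [Fact p.Prime] {d : ℕ}

lemma matrix_natCast_pow_dvd_iff {n : ℕ} {A : Matrix (Fin d) (Fin d) ℤ_[p]} :
    (p : Matrix (Fin d) (Fin d) ℤ_[p]) ^ n ∣ A ↔ ∀ a b, (p : ℤ_[p]) ^ n ∣ A a b := by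
  have key : ∀ C : Matrix (Fin d) (Fin d) ℤ_[p],
      (p : Matrix (Fin d) (Fin d) ℤ_[p]) ^ n * C = (p : ℤ_[p]) ^ n • C := fun C => by
    rw [← Nat.cast_pow, ← Nat.cast_pow, ← nsmul_eq_mul, Nat.cast_smul_eq_nsmul]
  constructor
  · rintro ⟨C, rfl⟩ a b
    rw [key]
    exact ⟨C a b, rfl⟩
  · intro h
    choose C hC using h
    refine ⟨Matrix.of C, ?_⟩
    rw [key]
    ext a b
    simp [hC a b]

lemma csRed_eq_iff {n : ℕ} {A B : (Matrix (Fin d) (Fin d) ℤ_[p])ˣ} :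
    csRed p n d A = csRed p n d B ↔
      (p : Matrix (Fin d) (Fin d) ℤ_[p]) ^ n ∣ (A : Matrix (Fin d) (Fin d) ℤ_[p]) - B := by
  rw [matrix_natCast_pow_dvd_iff, Units.ext_iff, ← Matrix.ext_iff]
  refine forall₂_congr fun a b => ?_
  change Ideal.Quotient.mk _ (A.val a b) = Ideal.Quotient.mk _ (B.val a b) ↔ _
  rw [Ideal.Quotient.eq, Ideal.mem_span_singleton, Matrix.sub_apply]

lemma mem_CS_iff {n : ℕ} {A : (Matrix (Fin d) (Fin d) ℤ_[p])ˣ} :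
    A ∈ CS p n d ↔
      ∃ X, (A : Matrix (Fin d) (Fin d) ℤ_[p]) =
        1 + (p : Matrix (Fin d) (Fin d) ℤ_[p]) ^ n * X := by
  rw [CS, MonoidHom.mem_ker, ← map_one (csRed p n d), csRed_eq_iff, Units.val_one]
  exact exists_congr fun X => by rw [sub_eq_iff_eq_add, add_comm]

lemma mk_eq_mk_iff {n : ℕ} {x y : CS p n d} :
    (QuotientGroup.mk x : CS p n d ⧸ csNext p n d) = QuotientGroup.mk y ↔
      (p : Matrix (Fin d) (Fin d) ℤ_[p]) ^ (n + 1) ∣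
        (x.1 : Matrix (Fin d) (Fin d) ℤ_[p]) - y.1 := by
  rw [QuotientGroup.eq, csNext, MonoidHom.mem_ker, map_mul, map_inv, inv_mul_eq_one]
  exact csRed_eq_iff

lemma matrix_eq_of_forall_dvd {A B : Matrix (Fin d) (Fin d) ℤ_[p]}
    (h : ∀ n, (p : Matrix (Fin d) (Fin d) ℤ_[p]) ^ n ∣ A - B) : A = B := by
  ext a b
  rw [← sub_eq_zero]
  refine IsHausdorff.haus (I := IsLocalRing.maximalIdeal ℤ_[p]) inferInstance _ fun n => ?_
  rw [SModEq.zero, smul_eq_mul, Ideal.mul_top, PadicInt.maximalIdeal_eq_span_p,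
    Ideal.span_singleton_pow, Ideal.mem_span_singleton]
  exact matrix_natCast_pow_dvd_iff.1 (h n) a b

lemma matrix_exists_limit (u : ℕ → Matrix (Fin d) (Fin d) ℤ_[p])
    (h : ∀ n, (p : Matrix (Fin d) (Fin d) ℤ_[p]) ^ n ∣ u (n + 1) - u n) :
    ∃ L, ∀ n, (p : Matrix (Fin d) (Fin d) ℤ_[p]) ^ n ∣ u n - L := by
  have hle : ∀ m n, m ≤ n → (p : Matrix (Fin d) (Fin d) ℤ_[p]) ^ m ∣ u m - u n := by
    intro m n hmn
    induction n, hmn using Nat.le_induction with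
    | base => simp
    | succ n hmn ih =>
      rw [← sub_sub_sub_cancel_right _ _ (u n)]
      exact dvd_sub ih ((pow_dvd_pow _ hmn).trans (h n))
  have hentry : ∀ a b, ∃ l : ℤ_[p], ∀ n, (p : ℤ_[p]) ^ n ∣ u n a b - l := by
    intro a b
    obtain ⟨l, hl⟩ := IsPrecomplete.prec (I := IsLocalRing.maximalIdeal ℤ_[p]) inferInstance
      (f := fun n => u n a b) (fun {m n} hmn => by
        rw [SModEq.sub_mem, smul_eq_mul, Ideal.mul_top, PadicInt.maximalIdeal_eq_span_p,
          Ideal.span_singleton_pow, Ideal.mem_span_singleton]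
        exact matrix_natCast_pow_dvd_iff.1 (hle m n hmn) a b)
    refine ⟨l, fun n => ?_⟩
    have := hl n
    rwa [SModEq.sub_mem, smul_eq_mul, Ideal.mul_top, PadicInt.maximalIdeal_eq_span_p,
      Ideal.span_singleton_pow, Ideal.mem_span_singleton] at this
  choose L hL using hentry
  exact ⟨Matrix.of L, fun n => matrix_natCast_pow_dvd_iff.2 fun a b => hL a b n⟩

/-- A Hensel-type statement: `X ↦ Y - p q(X)` contracts the `p`-adic distance, so its iterates
converge to a fixed point. -/
lemma exists_add_mul_eq (q : Matrix (Fin d) (Fin d) ℤ_[p] → Matrix (Fin d) (Fin d) ℤ_[p])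
    (hq : ∀ n x y, (p : Matrix (Fin d) (Fin d) ℤ_[p]) ^ n ∣ x - y →
      (p : Matrix (Fin d) (Fin d) ℤ_[p]) ^ n ∣ q x - q y)
    (Y : Matrix (Fin d) (Fin d) ℤ_[p]) :
    ∃ X, X + (p : Matrix (Fin d) (Fin d) ℤ_[p]) * q X = Y := by
  let F : Matrix (Fin d) (Fin d) ℤ_[p] → Matrix (Fin d) (Fin d) ℤ_[p] :=
    fun X => Y - (p : Matrix (Fin d) (Fin d) ℤ_[p]) * q X
  have hF : ∀ n X X', (p : Matrix (Fin d) (Fin d) ℤ_[p]) ^ n ∣ X - X' →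
      (p : Matrix (Fin d) (Fin d) ℤ_[p]) ^ (n + 1) ∣ F X - F X' := by
    intro n X X' h
    have h' : X' - X = -(X - X') := (neg_sub _ _).symm
    obtain ⟨c, hc⟩ := hq n _ _ (h' ▸ (dvd_neg.2 h))
    refine ⟨c, ?_⟩
    rw [pow_succ', mul_assoc, ← hc]
    simp only [F, mul_sub]
    abel
  obtain ⟨L, hL⟩ := matrix_exists_limit (fun n => F^[n] Y) (fun n => by
    induction n with
    | zero => simp
    | succ n ih =>
      have := hF n _ _ ih
      rwa [← Function.iterate_succ_apply' F, ← Function.iterate_succ_apply' F] at this)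
  refine ⟨L, ?_⟩
  have hfix : L = F L := matrix_eq_of_forall_dvd fun n => by
    rw [← neg_sub, dvd_neg, ← sub_sub_sub_cancel_left _ _ (F^[n + 1] Y)]
    refine dvd_sub ((pow_dvd_pow _ n.le_succ).trans (hL (n + 1))) ?_
    rw [Function.iterate_succ_apply']
    exact (pow_dvd_pow _ n.le_succ).trans (hF n _ _ (hL n))
  exact eq_sub_iff_add_eq.1 hfix

lemma exists_pow_eq_of_mem_CS {j : ℕ} (hj : 0 < j) (h2 : p = 2 → 2 ≤ j)
    {B : (Matrix (Fin d) (Fin d) ℤ_[p])ˣ} (hB : B ∈ CS p (j + 1) d) :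
    ∃ A ∈ CS p j d, A ^ p = B := by
  have hp : p.Prime := Fact.out
  obtain ⟨Y, hY⟩ := mem_CS_iff.1 hB
  obtain ⟨q, hq, hQ⟩ := exists_pow_expansion_ring (Matrix (Fin d) (Fin d) ℤ_[p]) p hp j hj h2
  obtain ⟨X, hX⟩ := exists_add_mul_eq q hq Y
  have hpow : (1 + (p : Matrix (Fin d) (Fin d) ℤ_[p]) ^ j * X) ^ p = B := by
    rw [hQ, hY, ← hX, mul_add, ← mul_assoc, ← pow_succ, add_assoc]
  obtain ⟨A, hA⟩ := (isUnit_pow_iff hp.ne_zero).1 (hpow ▸ B.isUnit)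
  refine ⟨A, mem_CS_iff.2 ⟨X, hA⟩, Units.ext ?_⟩
  rw [Units.val_pow_eq_pow_val, hA, hpow]

lemma matrix_natCast_pow_mul_cancel (n : ℕ) {A B : Matrix (Fin d) (Fin d) ℤ_[p]}
    (h : (p : Matrix (Fin d) (Fin d) ℤ_[p]) ^ n * A =
      (p : Matrix (Fin d) (Fin d) ℤ_[p]) ^ n * B) : A = B := by
  have hp : p.Prime := Fact.out
  rw [← Nat.cast_pow, ← nsmul_eq_mul, ← nsmul_eq_mul] at h
  ext a b
  have := congrFun (congrFun h a) b
  simpa [hp.ne_zero] using this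

/-- On `1 + p^j X`, the `p`-th power map is multiplication of `X` by `p` to leading order. -/
lemma natCast_pow_dvd_pow_sub {j : ℕ} (hj : 0 < j) (h2 : p = 2 → 2 ≤ j)
    (X : Matrix (Fin d) (Fin d) ℤ_[p]) :
    (p : Matrix (Fin d) (Fin d) ℤ_[p]) ^ (j + 2) ∣
      (1 + (p : Matrix (Fin d) (Fin d) ℤ_[p]) ^ j * X) ^ p -
        (1 + (p : Matrix (Fin d) (Fin d) ℤ_[p]) ^ (j + 1) * X) := by
  obtain ⟨q, hq, hQ⟩ := exists_pow_expansion_ring (Matrix (Fin d) (Fin d) ℤ_[p]) p Fact.out j hj h2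
  exact ⟨_, by rw [hQ X, add_sub_cancel_left]⟩

lemma pow_mem_CS {j : ℕ} (hj : 0 < j) (h2 : p = 2 → 2 ≤ j)
    {A : (Matrix (Fin d) (Fin d) ℤ_[p])ˣ} (hA : A ∈ CS p j d) : A ^ p ∈ CS p (j + 1) d := by
  obtain ⟨X, hX⟩ := mem_CS_iff.1 hA
  obtain ⟨Z, hZ⟩ := natCast_pow_dvd_pow_sub hj h2 X
  refine mem_CS_iff.2 ⟨X + p * Z, ?_⟩
  rw [Units.val_pow_eq_pow_val, hX, mul_add, ← mul_assoc, ← pow_succ, ← hZ]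
  abel

/-- The product of `1 + p^n X` and `1 + p^n Y` is `1 + p^n (X + Y)` modulo `p^(n+1)`. -/
lemma one_add_mul_one_add (n : ℕ) (hn : 0 < n) (X Y : Matrix (Fin d) (Fin d) ℤ_[p]) :
    ∃ W, (1 + (p : Matrix (Fin d) (Fin d) ℤ_[p]) ^ n * X) *
      (1 + (p : Matrix (Fin d) (Fin d) ℤ_[p]) ^ n * Y) =
        1 + (p : Matrix (Fin d) (Fin d) ℤ_[p]) ^ n * (X + Y + p * W) := by
  obtain ⟨m, rfl⟩ : ∃ m, n = m + 1 := ⟨n - 1, by omega⟩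
  refine ⟨X * ((p : Matrix (Fin d) (Fin d) ℤ_[p]) ^ m * Y), ?_⟩
  have h : X * ((p : Matrix (Fin d) (Fin d) ℤ_[p]) ^ (m + 1) * Y) =
      p * (X * ((p : Matrix (Fin d) (Fin d) ℤ_[p]) ^ m * Y)) := by
    rw [pow_succ', mul_assoc, ← mul_assoc X, ← (Nat.cast_commute p X).eq, mul_assoc]
  rw [← h]
  simp only [mul_add, add_mul, one_mul, mul_one, mul_assoc]
  abel

/-- The homomorphism `CS(j,d,p) → CS(j+1,d,p)/CS(j+2,d,p)` sending `x` to the class of `x^p`. -/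
noncomputable def powHom {j : ℕ} (hj : 0 < j) (h2 : p = 2 → 2 ≤ j) :
    CS p j d →* CS p (j + 1) d ⧸ csNext p (j + 1) d :=
  MonoidHom.mk' (fun x => QuotientGroup.mk ⟨x.1 ^ p, pow_mem_CS hj h2 x.2⟩) (by
    rintro ⟨x, hx⟩ ⟨y, hy⟩
    rw [← QuotientGroup.mk_mul, mk_eq_mk_iff]
    obtain ⟨X, hX⟩ := mem_CS_iff.1 hx
    obtain ⟨Y, hY⟩ := mem_CS_iff.1 hy
    simp only [MulMemClass.mk_mul_mk, Units.val_mul, Units.val_pow_eq_pow_val,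
      hX, hY]
    obtain ⟨W, hW⟩ := one_add_mul_one_add j hj X Y
    obtain ⟨W', hW'⟩ := one_add_mul_one_add (j + 1) j.succ_pos X Y
    rw [hW]
    obtain ⟨Z, hZ⟩ := natCast_pow_dvd_pow_sub hj h2 (X + Y + (p : Matrix (Fin d) (Fin d) ℤ_[p]) * W)
    obtain ⟨Z₁, hZ₁⟩ := natCast_pow_dvd_pow_sub hj h2 X
    obtain ⟨Z₂, hZ₂⟩ := natCast_pow_dvd_pow_sub hj h2 Y
    rw [sub_eq_iff_eq_add] at hZ
    set P : Matrix (Fin d) (Fin d) ℤ_[p] := (p : Matrix (Fin d) (Fin d) ℤ_[p])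
    set a := (1 + P ^ j * X) ^ p
    set b := (1 + P ^ j * Y) ^ p
    have hab : P ^ (j + 2) ∣ a * b - (1 + P ^ (j + 1) * X) * (1 + P ^ (j + 1) * Y) := by
      have : a * b - (1 + P ^ (j + 1) * X) * (1 + P ^ (j + 1) * Y) =
          (a - (1 + P ^ (j + 1) * X)) * b +
            (1 + P ^ (j + 1) * X) * (b - (1 + P ^ (j + 1) * Y)) := by
        rw [sub_mul, mul_sub]; abel
      rw [this]
      exact dvd_add (Dvd.dvd.mul_right ⟨_, hZ₁⟩ _) (natCast_pow_dvd_mul_left _ _ _ ⟨_, hZ₂⟩)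
    obtain ⟨V, hV⟩ := hab
    rw [hW', sub_eq_iff_eq_add] at hV
    refine ⟨Z - V + W - W', ?_⟩
    rw [hZ, hV]
    simp only [mul_add, mul_sub, ← mul_assoc, ← pow_succ]
    abel)

lemma powHom_ker {j : ℕ} (hj : 0 < j) (h2 : p = 2 → 2 ≤ j) :
    (powHom (d := d) hj h2).ker = csNext p j d := by
  ext ⟨x, hx⟩
  obtain ⟨X, hX⟩ := mem_CS_iff.1 hx
  obtain ⟨Z, hZ⟩ := natCast_pow_dvd_pow_sub hj h2 X
  rw [sub_eq_iff_eq_add] at hZ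
  rw [← QuotientGroup.eq_one_iff (N := csNext p j d), ← QuotientGroup.mk_one, mk_eq_mk_iff, MonoidHom.mem_ker]
  change QuotientGroup.mk _ = QuotientGroup.mk 1 ↔ _
  rw [mk_eq_mk_iff]
  simp only [Subgroup.coe_one, Units.val_one, Units.val_pow_eq_pow_val, hX, hZ]
  set P : Matrix (Fin d) (Fin d) ℤ_[p] := (p : Matrix (Fin d) (Fin d) ℤ_[p])
  constructor
  · rintro ⟨V, hV⟩
    have : P ^ (j + 1) * X = P ^ (j + 1) * (P * (V - Z)) := by
      rw [← mul_assoc, ← pow_succ, mul_sub, ← hV]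
      abel
    rw [matrix_natCast_pow_mul_cancel _ this, add_sub_cancel_left, ← mul_assoc, ← pow_succ]
    exact dvd_mul_right _ _
  · rintro ⟨V, hV⟩
    rw [add_sub_cancel_left, pow_succ, mul_assoc] at hV
    have hXV := matrix_natCast_pow_mul_cancel _ hV
    refine ⟨Z + V, ?_⟩
    rw [hXV, mul_add, ← mul_assoc, ← pow_succ]
    abel

lemma powHom_surjective {j : ℕ} (hj : 0 < j) (h2 : p = 2 → 2 ≤ j) :
    Function.Surjective (powHom (p := p) (d := d) hj h2) := by
  intro q
  obtain ⟨⟨B, hB⟩, rfl⟩ := QuotientGroup.mk_surjective q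
  obtain ⟨A, hA, rfl⟩ := exists_pow_eq_of_mem_CS hj h2 hB
  exact ⟨⟨A, hA⟩, rfl⟩

end Padic

/-- Every element of `CS(j+1,d,p)` is a `p`-th power of an element of `CS(j,d,p)`, and the map
`x ↦ x^p` induces a group isomorphism `CS(j,d,p)/CS(j+1,d,p) ≃ CS(j+1,d,p)/CS(j+2,d,p)`. -/
theorem congruenceSubgroup_pow_p_surjective_and_induces_iso
    (p : ℕ) [Fact p.Prime] (d j : ℕ) (hd : 0 < d) (hj : 0 < j) (h2 : p = 2 → 2 ≤ j) :
    (∀ B ∈ CS p (j + 1) d, ∃ A ∈ CS p j d, A ^ p = B) ∧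
    ∃ φ : (↥(CS p j d) ⧸ csNext p j d) ≃* (↥(CS p (j + 1) d) ⧸ csNext p (j + 1) d),
      ∀ (x : ↥(CS p j d)) (y : ↥(CS p (j + 1) d)),
        (x : (Matrix (Fin d) (Fin d) ℤ_[p])ˣ) ^ p = (y : (Matrix (Fin d) (Fin d) ℤ_[p])ˣ) →
          φ (QuotientGroup.mk x) = QuotientGroup.mk y := by
  refine ⟨fun B hB => exists_pow_eq_of_mem_CS hj h2 hB,
    (QuotientGroup.quotientMulEquivOfEq (powHom_ker hj h2).symm).trans
      (QuotientGroup.quotientKerEquivOfSurjective _ (powHom_surjective hj h2)), ?_⟩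
  rintro x ⟨y, hy⟩ rfl
  rfl
end
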